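/- Let ‖·‖_X be an admissible extended-value quasinorm on the Borel functions of a compact Hausdorff space Ω satisfying a crude upper p-estimate with constant a and a crude lower q-estimate with constant b, where 0 < p < q < ∞. Let f ≥ 0 be a Borel function with ‖f‖_X = 1. Then there is a Borel probability measure μ on Ω such that f > 0 μ-almost everywhere and for every Borel g with ‖g‖_X < ∞, ‖g f^{−1}‖_{Λ_{p,q}(μ)} ≤ a b K_{q/p}^{−1/p} ‖g‖_X, where K_s = 2(2^s − 1)^{−1/s} − 1. -/

import Mathlib

open Set Filter Topology MeasureTheory ENNReal

/-- An admissible extended-value quasinorm on the Borel functions of `Ω`. -/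
structure AdmissibleQuasinorm (Ω : Type*) [TopologicalSpace Ω] [MeasurableSpace Ω] where
  N : (Ω → ℝ) → ℝ≥0∞
  mono : ∀ f g : Ω → ℝ, Measurable f → Measurable g →
    (∀ x, |f x| ≤ |g x|) → N f ≤ N g
  smul : ∀ (α : ℝ) (f : Ω → ℝ), Measurable f →
    N (fun x => α * f x) = ENNReal.ofReal |α| * N f
  quasi : ∃ C : ℝ≥0∞, ∀ f g : Ω → ℝ, Measurable f → Measurable g →
    (∀ x, 0 ≤ f x) → (∀ x, 0 ≤ g x) → (∀ x, f x = 0 ∨ g x = 0) →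
    N (fun x => f x + g x) ≤ C * (N f + N g)
  exists_pos : ∃ u : Ω → ℝ, Measurable u ∧ (∀ x, 0 < u x) ∧ 0 < N u ∧ N u < ⊤
  (cont : ∀ (f : ℕ → Ω → ℝ) (g : Ω → ℝ), (∀ n, Measurable (f n)) → Measurable g →
    (∀ n x, 0 ≤ f n x) → (∀ n x, f n x ≤ f (n + 1) x) →
    (∀ x, Tendsto (fun n => f n x) atTop (𝓝 (g x))) →
    Tendsto (fun n => N (f n)) atTop (𝓝 (N g)))

/-- `f₁, …, fₙ` are disjointly supported. -/
def DisjSupp {Ω : Type*} {n : ℕ} (f : Fin n → Ω → ℝ) : Prop :=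
  ∀ i j, i ≠ j → ∀ x, f i x = 0 ∨ f j x = 0

/-- A crude upper `p`-estimate with constant `a`. -/
def CrudeUpper {Ω : Type*} [TopologicalSpace Ω] [MeasurableSpace Ω]
    (X : AdmissibleQuasinorm Ω) (p a : ℝ) : Prop :=
  ∀ (n : ℕ) (f : Fin n → Ω → ℝ), (∀ i, Measurable (f i)) → DisjSupp f →
    X.N (fun x => ∑ i, f i x) ≤ ENNReal.ofReal a * (∑ i, X.N (f i) ^ p) ^ (1 / p)

/-- A crude lower `q`-estimate with constant `b`. -/
def CrudeLower {Ω : Type*} [TopologicalSpace Ω] [MeasurableSpace Ω]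
    (X : AdmissibleQuasinorm Ω) (q b : ℝ) : Prop :=
  ∀ (n : ℕ) (f : Fin n → Ω → ℝ), (∀ i, Measurable (f i)) → DisjSupp f →
    (∑ i, X.N (f i) ^ q) ^ (1 / q) ≤ ENNReal.ofReal b * X.N (fun x => ∑ i, f i x)


/-- `A : Fin n → Set Ω` is a finite Borel partition of `Ω`. -/
def IsBorelPartition {Ω : Type*} [MeasurableSpace Ω] {n : ℕ} (A : Fin n → Set Ω) : Prop :=
  (∀ i, MeasurableSet (A i)) ∧ Pairwise (Function.onFun Disjoint A) ∧ (⋃ i, A i) = univ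

/-- The `Λ_{p,q}(μ)` functional for `p < q`:
`sup (Σᵢ (inf_{ω ∈ Aᵢ} |f ω|)^q μ(Aᵢ)^{q/p})^{1/q}` over finite Borel partitions. -/
noncomputable def LambdaSup {Ω : Type*} [MeasurableSpace Ω]
    (μ : Measure Ω) (p q : ℝ) (f : Ω → ℝ) : ℝ≥0∞ :=
  ⨆ (n : ℕ) (A : Fin n → Set Ω) (_ : IsBorelPartition A),
    (∑ i, (⨅ x ∈ A i, ENNReal.ofReal |f x|) ^ q * μ (A i) ^ (q / p)) ^ (1 / q)

/-- The `Λ_{p,q}(μ)` functional for `q < p`: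
`inf (Σᵢ (sup_{ω ∈ Aᵢ} |f ω|)^q μ(Aᵢ)^{q/p})^{1/q}` over finite Borel partitions.
(Here `LambdaInf μ p q` has inner exponent `q` and measure exponent `q/p`.) -/
noncomputable def LambdaInf {Ω : Type*} [MeasurableSpace Ω]
    (μ : Measure Ω) (p q : ℝ) (f : Ω → ℝ) : ℝ≥0∞ :=
  ⨅ (n : ℕ) (A : Fin n → Set Ω) (_ : IsBorelPartition A),
    (∑ i, (⨆ x ∈ A i, ENNReal.ofReal |f x|) ^ q * μ (A i) ^ (q / p)) ^ (1 / q)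

/-- The decreasing rearrangement `f*(t) = inf_{μ(E) ≤ t} sup_{ω ∉ E} |f ω|`. -/
noncomputable def decRearr {Ω : Type*} [MeasurableSpace Ω]
    (μ : Measure Ω) (f : Ω → ℝ) (t : ℝ) : ℝ≥0∞ :=
  ⨅ (E : Set Ω) (_ : MeasurableSet E) (_ : μ E ≤ ENNReal.ofReal t),
    ⨆ x ∈ Eᶜ, ENNReal.ofReal |f x|

/-- The Lorentz quasinorm `‖f‖_{L_{p,q}(μ)} = (∫₀^∞ (q/p) t^{q/p-1} f*(t)^q dt)^{1/q}`. -/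
noncomputable def LorentzNorm {Ω : Type*} [MeasurableSpace Ω]
    (μ : Measure Ω) (p q : ℝ) (f : Ω → ℝ) : ℝ≥0∞ :=
  (∫⁻ t in Ioi (0 : ℝ),
      ENNReal.ofReal (q / p * t ^ (q / p - 1)) * decRearr μ f t ^ q) ^ (1 / q)

/-!
Put `s = q / p`. By the upper `p`-estimate the set function `A ↦ ‖f χ_A‖ᵖ` is quasi-subadditive with
constant `aᵖ`, and by the lower `q`-estimate its `s`-variation `ψ` is finite; `ψ` is still
quasi-subadditive and satisfies a lower `s`-estimate with constant `1`. By Minkowski's inequality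
the largest submeasure below `ψ` inherits the lower estimate, and its total mass is at least
`a⁻ᵖ * ψ univ`.

A submeasure `φ` with a lower `s`-estimate dominates a finitely additive measure of total mass at
least `s ^ (-(1 + 1 / s)) * φ univ`. Indeed, the Hahn-Banach theorem yields a finitely additive
measure `L ≤ φ` whose mass is the least cost of a fractional cover of the space. If the space is
finite, an optimal cover `c` exists, and by complementary slackness `L` and `φ` agree on the sets
`S` of `c`, so that the lower estimate bounds `φ (E ∩ S)` in terms of `L`. Exhausting the space
greedily by such `S`, with an explicit potential controlling the sum, bounds `φ univ`.

The normalized measure `μ` satisfies `μ ≤ D * ψ` with `D = aᵖ * s ^ (1 + 1 / s)`, and comparing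
`‖f χ_A‖` with `‖g χ_A‖` piece by piece bounds `g / f` with `s ^ (1 + 1 / s)` in place of `K_s⁻¹`.
Finally `s ^ (1 + 1 / s) ≤ K_s⁻¹` by Bernoulli's inequality.
-/

/-! ### Minkowski's inequality -/

section Minkowski

variable {ι κ : Type*} {r : ℝ}

theorem Lp_sum_le_sum_Lp (hr : 1 ≤ r) (u : Finset ι) (t : Finset κ) (x : ι → κ → ℝ≥0∞) :
    (∑ i ∈ u, (∑ j ∈ t, x i j) ^ r) ^ (1 / r) ≤ ∑ j ∈ t, (∑ i ∈ u, x i j ^ r) ^ (1 / r) := by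
  have hr0 : 0 < r := zero_lt_one.trans_le hr
  have := Finset.le_sum_of_subadditive (fun y : ι → ℝ≥0∞ => (∑ i ∈ u, y i ^ r) ^ (1 / r))
    (by simp [hr0]) (fun y z => ENNReal.Lp_add_le u y z hr) t fun j i => x i j
  simpa only [Finset.sum_apply] using this

theorem Lp_tsum_le_tsum_Lp (hr : 1 ≤ r) (u : Finset ι) (x : ι → κ → ℝ≥0∞) :
    (∑ i ∈ u, (∑' j, x i j) ^ r) ^ (1 / r) ≤ ∑' j, (∑ i ∈ u, x i j ^ r) ^ (1 / r) := by
  have hlim : Tendsto (fun t : Finset κ => (∑ i ∈ u, (∑ j ∈ t, x i j) ^ r) ^ (1 / r)) atTop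
      (𝓝 ((∑ i ∈ u, (∑' j, x i j) ^ r) ^ (1 / r))) :=
    (ENNReal.continuous_rpow_const.tendsto _).comp <| tendsto_finsetSum u fun i _ =>
      (ENNReal.continuous_rpow_const.tendsto _).comp ENNReal.summable.hasSum
  exact le_of_tendsto' hlim fun t => (Lp_sum_le_sum_Lp hr u t x).trans (ENNReal.sum_le_tsum t)

theorem mul_Lp_sum (hr : 0 < r) (c : ℝ≥0∞) (u : Finset ι) (x : ι → ℝ≥0∞) :
    c * (∑ i ∈ u, x i ^ r) ^ (1 / r) = (∑ i ∈ u, (c * x i) ^ r) ^ (1 / r) := by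
  simp only [ENNReal.mul_rpow_of_nonneg _ _ hr.le, ← Finset.mul_sum]
  rw [ENNReal.mul_rpow_of_nonneg _ _ (one_div_pos.2 hr).le, one_div, ENNReal.rpow_rpow_inv hr.ne']

end Minkowski

/-! ### Real inequalities -/

section RealInequalities

variable {s x y κ m v : ℝ}

theorem rpow_sub_rpow_sub_le (hs : 1 ≤ s) (hx : 0 < x) (hyx : y ≤ x) :
    x ^ s - (x - y) ^ s ≤ s * x ^ (s - 1) * y := by
  have hyx' : y / x ≤ 1 := (div_le_one hx).2 hyx
  have bernoulli := one_add_mul_self_le_rpow_one_add (neg_le_neg hyx') hs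
  have hfactor : (x - y) ^ s = x ^ s * (1 + -(y / x)) ^ s := by
    rw [← Real.mul_rpow hx.le (by linarith)]
    congr 1
    field_simp
    ring
  have hpow : x ^ (s - 1) * y = x ^ s * (y / x) := by
    rw [Real.rpow_sub_one hx.ne']
    field_simp
  rw [mul_assoc, hpow, hfactor]
  linarith [mul_le_mul_of_nonneg_left bernoulli (Real.rpow_nonneg hx.le s)]

theorem sub_rpow_one_div_le (hs : 1 ≤ s) (hm : 0 < m) (hym : y ≤ m) :
    (m - y) ^ (1 / s) ≤ m ^ (1 / s) * (1 - 1 / s * (y / m)) := by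
  have hs0 : 0 < s := zero_lt_one.trans_le hs
  have hym' : y / m ≤ 1 := (div_le_one hm).2 hym
  have bernoulli := rpow_one_add_le_one_add_mul_self (neg_le_neg hym') (p := 1 / s)
    (by positivity) ((div_le_one hs0).2 hs)
  have hfactor : m - y = m * (1 + -(y / m)) := by
    field_simp
    ring
  rw [hfactor, Real.mul_rpow hm.le (by linarith)]
  gcongr
  linarith

theorem le_of_rpow_le_rpow_sub (hs : 1 ≤ s) (hκ : 0 ≤ κ) (hm : 0 < m) (hy : 0 < y) (hyx : y ≤ x)
    (hmx : m * x ≤ κ * y) (hv : 0 ≤ v) (hvs : v ^ s ≤ x ^ s - (x - y) ^ s) :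
    v ≤ s ^ (1 / s) * (κ / m) ^ (1 - 1 / s) * y := by
  have hs0 : 0 < s := zero_lt_one.trans_le hs
  have hx : 0 < x := hy.trans_le hyx
  have hxle : x ≤ κ / m * y := by
    rw [div_mul_eq_mul_div, le_div_iff₀ hm]
    linarith
  refine (Real.rpow_le_rpow_iff hv (by positivity) hs0).1 ?_
  calc v ^ s ≤ s * x ^ (s - 1) * y := hvs.trans (rpow_sub_rpow_sub_le hs hx hyx)
    _ ≤ s * (κ / m * y) ^ (s - 1) * y := by gcongr
    _ = (s ^ (1 / s) * (κ / m) ^ (1 - 1 / s) * y) ^ s := by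
      rw [Real.mul_rpow (by positivity) hy.le, Real.mul_rpow (by positivity) hy.le,
        Real.mul_rpow (by positivity) (by positivity), ← Real.rpow_mul hs0.le,
        ← Real.rpow_mul (by positivity), one_div_mul_cancel hs0.ne', Real.rpow_one,
        sub_mul, one_div_mul_cancel hs0.ne', one_mul, Real.rpow_sub_one hy.ne']
      field_simp

/-- The potential bounding the mass still to be exhausted by the greedy algorithm from a set of
measure `m`, when the total measure is `κ`. -/
noncomputable def greedyPotential (s κ m : ℝ) : ℝ :=
  s ^ (1 + 1 / s) * κ ^ (1 - 1 / s) * m ^ (1 / s)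

theorem greedyPotential_self (hκ : 0 ≤ κ) : greedyPotential s κ κ = s ^ (1 + 1 / s) * κ := by
  rw [greedyPotential, mul_assoc, ← Real.rpow_add' hκ (by norm_num), sub_add_cancel, Real.rpow_one]

theorem greedyPotential_zero (hs : s ≠ 0) : greedyPotential s κ 0 = 0 := by
  rw [greedyPotential, Real.zero_rpow (one_div_ne_zero hs), mul_zero]

theorem add_greedyPotential_sub_le (hs : 1 ≤ s) (hκ : 0 ≤ κ) (hm : 0 < m) (hy : 0 < y)
    (hyx : y ≤ x) (hym : y ≤ m) (hmx : m * x ≤ κ * y) (hv : 0 ≤ v)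
    (hvs : v ^ s ≤ x ^ s - (x - y) ^ s) :
    v + greedyPotential s κ (m - y) ≤ greedyPotential s κ m := by
  have hs0 : 0 < s := zero_lt_one.trans_le hs
  have hgain : s ^ (1 / s) * (κ / m) ^ (1 - 1 / s) * y =
      s ^ (1 + 1 / s) * κ ^ (1 - 1 / s) * (m ^ (1 / s) * (1 / s * (y / m))) := by
    rw [Real.rpow_add hs0, Real.rpow_one, Real.div_rpow hκ hm.le, Real.rpow_sub hm, Real.rpow_one]
    field_simp
  have hconcave : greedyPotential s κ (m - y) ≤
      s ^ (1 + 1 / s) * κ ^ (1 - 1 / s) * (m ^ (1 / s) * (1 - 1 / s * (y / m))) :=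
    mul_le_mul_of_nonneg_left (sub_rpow_one_div_le hs hm hym) (by positivity)
  have hv_le := le_of_rpow_le_rpow_sub hs hκ hm hy hyx hmx hv hvs
  rw [hgain] at hv_le
  rw [greedyPotential.eq_def s κ m]
  linarith

theorem one_add_le_two_rpow (hs : 1 ≤ s) : 1 + s ≤ 2 ^ s := by
  have bernoulli := one_add_mul_self_le_rpow_one_add (s := 1) (by norm_num) hs
  rwa [mul_one, one_add_one_eq_two] at bernoulli

theorem two_mul_rpow_sub_one_pos (hs : 1 ≤ s) : 0 < 2 * ((2 : ℝ) ^ s - 1) ^ (-(1 / s)) - 1 := by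
  have hs0 : 0 < s := zero_lt_one.trans_le hs
  have hd : 0 < (2 : ℝ) ^ s - 1 := by linarith [one_add_le_two_rpow hs]
  have hroot : ((2 : ℝ) ^ s - 1) ^ (1 / s) < 2 := by
    rw [one_div, Real.rpow_inv_lt_iff_of_pos hd.le two_pos.le hs0]
    linarith
  rwa [Real.rpow_neg hd.le, sub_pos, ← div_eq_mul_inv, one_lt_div (by positivity)]

theorem two_mul_rpow_sub_one_le (hs : 1 ≤ s) :
    2 * ((2 : ℝ) ^ s - 1) ^ (-(1 / s)) - 1 ≤ 1 / s ^ (1 + 1 / s) := by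
  have hs0 : 0 < s := zero_lt_one.trans_le hs
  have h2s : 1 + s ≤ (2 : ℝ) ^ s := one_add_le_two_rpow hs
  have hd : 0 < (2 : ℝ) ^ s - 1 := by linarith
  set x : ℝ := 1 / s ^ (1 + 1 / s) with hx
  have hx0 : 0 < x := by positivity
  have hsx : 1 + s * x = (s ^ (1 / s) + 1) / s ^ (1 / s) := by
    rw [hx, Real.rpow_add hs0, Real.rpow_one]
    field_simp
  have hroot : s ^ (1 / s) ≤ s := by
    simpa using Real.rpow_le_rpow_of_exponent_le hs ((div_le_one hs0).2 hs)
  have hpow : (2 : ℝ) ^ s ≤ (2 ^ s - 1) * (1 + x) ^ s := calc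
    (2 : ℝ) ^ s ≤ (2 ^ s - 1) * (1 + s * x) := by
      rw [hsx, ← mul_div_assoc, le_div_iff₀ (by positivity)]
      linarith
    _ ≤ (2 ^ s - 1) * (1 + x) ^ s := by
      gcongr
      exact one_add_mul_self_le_rpow_one_add (by linarith) hs
  have htwo : 2 ≤ ((2 : ℝ) ^ s - 1) ^ (1 / s) * (1 + x) := by
    refine (Real.rpow_le_rpow_iff (by positivity) (by positivity) hs0).1 ?_
    rwa [Real.mul_rpow (by positivity) (by positivity), ← Real.rpow_mul hd.le,
      one_div_mul_cancel hs0.ne', Real.rpow_one]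
  rwa [Real.rpow_neg hd.le, sub_le_iff_le_add', ← div_eq_mul_inv, div_le_iff₀' (by positivity)]

theorem ofReal_mul_rpow_le_ofReal_mul_two_mul_rpow_sub_one {p q : ℝ} (hp : 0 < p) (hpq : p ≤ q)
    (c : ℝ) :
    ENNReal.ofReal (c * (q / p) ^ (1 / p + 1 / q)) ≤
      ENNReal.ofReal (c * (2 * ((2 : ℝ) ^ (q / p) - 1) ^ (-(p / q)) - 1) ^ (-(1 / p))) := by
  have hs : 1 ≤ q / p := (one_le_div hp).2 hpq
  have hs0 : 0 < q / p := zero_lt_one.trans_le hs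
  have hK0 := two_mul_rpow_sub_one_pos hs
  have hK := two_mul_rpow_sub_one_le hs
  rw [one_div_div] at hK0 hK
  rcases le_or_gt c 0 with hc | hc
  · rw [ENNReal.ofReal_of_nonpos (mul_nonpos_of_nonpos_of_nonneg hc (by positivity))]
    exact zero_le
  · have hexp : (1 + p / q) * (1 / p) = 1 / p + 1 / q := by field_simp
    rw [← hexp, Real.rpow_mul hs0.le, Real.rpow_neg hK0.le, ← Real.inv_rpow hK0.le]
    gcongr
    exact (le_inv_comm₀ (by positivity) hK0).2 (by rwa [← one_div])

end RealInequalities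

/-! ### Set functions with lower estimates -/

section SetFunctions

variable {Ω R : Type*} [MeasurableSpace Ω]

/-- Finite subadditivity of a set function on the measurable sets; the values may be real or
extended. -/
def SubadditiveOnMeasurable [Add R] [LE R] (φ : Set Ω → R) : Prop :=
  ∀ ⦃A B : Set Ω⦄, MeasurableSet A → MeasurableSet B → φ (A ∪ B) ≤ φ A + φ B

/-- The lower `s`-estimate with constant `1` for a set function on the measurable sets; the values
may be real or extended. -/
def HasLowerEstimate [Add R] [LE R] [Pow R ℝ] (s : ℝ) (φ : Set Ω → R) : Prop :=
  ∀ ⦃A B : Set Ω⦄, MeasurableSet A → MeasurableSet B → Disjoint A B →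
    φ A ^ s + φ B ^ s ≤ φ (A ∪ B) ^ s

theorem SubadditiveOnMeasurable.preimage [Add R] [LE R] {Ω' : Type*} [MeasurableSpace Ω']
    {φ : Set Ω → R} (hφ : SubadditiveOnMeasurable φ) {T : Ω → Ω'} (hT : Measurable T) :
    SubadditiveOnMeasurable fun S => φ (T ⁻¹' S) :=
  fun _ _ hA hB => hφ (hT hA) (hT hB)

theorem HasLowerEstimate.preimage [Add R] [LE R] [Pow R ℝ] {Ω' : Type*} [MeasurableSpace Ω']
    {s : ℝ} {φ : Set Ω → R} (hφ : HasLowerEstimate s φ) {T : Ω → Ω'} (hT : Measurable T) :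
    HasLowerEstimate s fun S => φ (T ⁻¹' S) :=
  fun _ _ hA hB hAB => hφ (hT hA) (hT hB) (hAB.preimage T)

theorem HasLowerEstimate.apply_empty {s : ℝ} {φ : Set Ω → ℝ} (hφ : HasLowerEstimate s φ)
    (hs : s ≠ 0) (hφ0 : 0 ≤ φ) : φ ∅ = 0 := by
  have h := hφ .empty .empty (disjoint_empty ∅)
  rw [union_empty, add_le_iff_nonpos_left] at h
  exact (Real.rpow_eq_zero (hφ0 ∅) hs).1 (h.antisymm (Real.rpow_nonneg (hφ0 ∅) s))

theorem SubadditiveOnMeasurable.toReal {φ : Set Ω → ℝ≥0∞} (hφ : SubadditiveOnMeasurable φ)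
    (hfin : ∀ A, φ A ≠ ⊤) : SubadditiveOnMeasurable fun A => (φ A).toReal := fun A B hA hB =>
  ENNReal.toReal_le_add (hφ hA hB) (hfin A) (hfin B)

theorem HasLowerEstimate.toReal {s : ℝ} {φ : Set Ω → ℝ≥0∞} (hφ : HasLowerEstimate s φ)
    (hs : 0 ≤ s) (hfin : ∀ A, φ A ≠ ⊤) : HasLowerEstimate s fun A => (φ A).toReal := by
  intro A B hA hB hAB
  have hpow (C : Set Ω) : φ C ^ s ≠ ⊤ := ENNReal.rpow_ne_top_of_nonneg hs (hfin C)
  simpa only [ENNReal.toReal_rpow, ENNReal.toReal_add (hpow A) (hpow B)] using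
    ENNReal.toReal_mono (hpow _) (hφ hA hB hAB)

theorem HasLowerEstimate.mono {s : ℝ} {φ : Set Ω → ℝ≥0∞} {A B : Set Ω}
    (hφ : HasLowerEstimate s φ) (hs : 0 < s) (hA : MeasurableSet A) (hB : MeasurableSet B)
    (hAB : A ⊆ B) : φ A ≤ φ B := by
  have h := hφ hA (hB.diff hA) disjoint_sdiff_right
  rw [union_sdiff_cancel hAB] at h
  exact (ENNReal.rpow_le_rpow_iff hs).1 (le_self_add.trans h)

end SetFunctions

/-! ### Fractional covers -/

section FractionalCovers

theorem linearCombination_mono {ι : Type*} {v : ι → ℝ} (hv : 0 ≤ v) {c d : ι →₀ ℝ} (hcd : c ≤ d) :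
    Finsupp.linearCombination ℝ v c ≤ Finsupp.linearCombination ℝ v d := by
  rw [← sub_nonneg, ← map_sub]
  exact Finset.sum_nonneg fun i _ => mul_nonneg (sub_nonneg.2 hcd i) (hv i)

theorem linearCombination_indicator_apply {ι Ω : Type*} (F : ι → Set Ω) (c : ι →₀ ℝ) (x : Ω) :
    Finsupp.linearCombination ℝ (fun i => (F i).indicator (1 : Ω → ℝ)) c x =
      c.sum fun i t => t * (F i).indicator 1 x := by
  rw [Finsupp.linearCombination_apply, Finsupp.sum, Finset.sum_apply]
  rfl

variable {Ω : Type*} [MeasurableSpace Ω] {φ : Set Ω → ℝ} {g h : Ω → ℝ} {c d : Set Ω →₀ ℝ}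

/-- The finitely supported family of weights `c` on measurable sets is a fractional cover of `g`:
`g ≤ ∑ A, c A • χ_A`. Its cost with respect to a set function `φ` is
`Finsupp.linearCombination ℝ φ c = ∑ A, c A * φ A`. -/
structure IsFractionalCover (c : Set Ω →₀ ℝ) (g : Ω → ℝ) : Prop where
  nonneg : 0 ≤ c
  measurableSet : ∀ A ∈ c.support, MeasurableSet A
  le : g ≤ Finsupp.linearCombination ℝ (fun A : Set Ω => A.indicator (1 : Ω → ℝ)) c

/-- The least cost of a fractional cover of `g`; it has the junk value `0` when `g` has no cover. -/
noncomputable def coverCost (φ : Set Ω → ℝ) (g : Ω → ℝ) : ℝ :=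
  sInf (Finsupp.linearCombination ℝ φ '' {c | IsFractionalCover c g})

namespace IsFractionalCover

theorem zero (hg : g ≤ 0) : IsFractionalCover 0 g :=
  ⟨le_rfl, by simp, by simpa using hg⟩

theorem single {A : Set Ω} (hA : MeasurableSet A) {t : ℝ} (ht : 0 ≤ t)
    (hg : g ≤ t • A.indicator (1 : Ω → ℝ)) : IsFractionalCover (Finsupp.single A t) g where
  nonneg := Finsupp.single_nonneg.2 ht
  measurableSet B hB := by
    rwa [Finset.mem_singleton.1 (Finsupp.support_single_subset hB)]
  le := by rwa [Finsupp.linearCombination_single]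

theorem add (hc : IsFractionalCover c g) (hd : IsFractionalCover d h) :
    IsFractionalCover (c + d) (g + h) where
  nonneg := add_nonneg hc.nonneg hd.nonneg
  measurableSet A hA := by
    classical
    exact (Finset.mem_union.1 (Finsupp.support_add hA)).elim
      (hc.measurableSet A) (hd.measurableSet A)
  le := by
    rw [map_add]
    exact add_le_add hc.le hd.le

theorem smul (hc : IsFractionalCover c g) {t : ℝ} (ht : 0 ≤ t) :
    IsFractionalCover (t • c) (t • g) where
  nonneg := smul_nonneg ht hc.nonneg
  measurableSet A hA := hc.measurableSet A (Finsupp.support_smul hA)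
  le := by
    rw [map_smul]
    exact smul_le_smul_of_nonneg_left hc.le ht

theorem mapDomain {Ω' : Type*} [MeasurableSpace Ω'] {g' : Ω' → ℝ} (hc : IsFractionalCover c g)
    {F : Set Ω → Set Ω'} (hF : ∀ A ∈ c.support, MeasurableSet (F A))
    (hg' : g' ≤ Finsupp.linearCombination ℝ (fun A => (F A).indicator (1 : Ω' → ℝ)) c) :
    IsFractionalCover (c.mapDomain F) g' where
  nonneg := Finsupp.mapDomain_nonneg hc.nonneg
  measurableSet B hB := by
    classical
    obtain ⟨A, hA, rfl⟩ := Finset.mem_image.1 (Finsupp.mapDomain_support hB)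
    exact hF A hA
  le := by
    rw [Finsupp.linearCombination_mapDomain]
    exact hg'

theorem cost_nonneg (hc : IsFractionalCover c g) (hφ : 0 ≤ φ) :
    0 ≤ Finsupp.linearCombination ℝ φ c :=
  (map_zero _).symm.trans_le (linearCombination_mono hφ hc.nonneg)

theorem exists_of_simpleFunc (g : SimpleFunc Ω ℝ) : ∃ c, IsFractionalCover c g := by
  obtain ⟨t, ht⟩ := g.finite_range.bddAbove
  refine ⟨_, single .univ (abs_nonneg t) fun x => ?_⟩
  simpa using (ht (mem_range_self x)).trans (le_abs_self t)

end IsFractionalCover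

theorem coverCost_le (hφ : 0 ≤ φ) (hc : IsFractionalCover c g) :
    coverCost φ g ≤ Finsupp.linearCombination ℝ φ c :=
  csInf_le ⟨0, forall_mem_image.2 fun _ hd => hd.cost_nonneg hφ⟩ (mem_image_of_mem _ hc)

theorem le_coverCost {t : ℝ} (g : SimpleFunc Ω ℝ)
    (h : ∀ c, IsFractionalCover c g → t ≤ Finsupp.linearCombination ℝ φ c) : t ≤ coverCost φ g :=
  le_csInf (Nonempty.image _ (IsFractionalCover.exists_of_simpleFunc g)) (forall_mem_image.2 h)

theorem coverCost_add_le (hφ : 0 ≤ φ) (g h : SimpleFunc Ω ℝ) :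
    coverCost φ ⇑(g + h) ≤ coverCost φ g + coverCost φ h := by
  rw [← sub_le_iff_le_add]
  refine le_coverCost g fun c hc => ?_
  rw [sub_le_comm]
  refine le_coverCost h fun d hd => ?_
  rw [sub_le_iff_le_add', ← map_add]
  exact coverCost_le hφ (hc.add hd)

theorem coverCost_smul (hφ : 0 ≤ φ) {t : ℝ} (ht : 0 < t) (g : SimpleFunc Ω ℝ) :
    coverCost φ ⇑(t • g) = t * coverCost φ g := by
  have smul_le {u : ℝ} (hu : 0 < u) (k : SimpleFunc Ω ℝ) :
      coverCost φ ⇑(u • k) ≤ u * coverCost φ k := by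
    rw [← div_le_iff₀' hu]
    refine le_coverCost k fun c hc => ?_
    rw [div_le_iff₀' hu, ← smul_eq_mul, ← map_smul]
    exact coverCost_le hφ (hc.smul hu.le)
  refine (smul_le ht g).antisymm ?_
  have := smul_le (inv_pos.2 ht) (t • g)
  rwa [inv_smul_smul₀ ht.ne', le_inv_mul_iff₀ ht] at this

end FractionalCovers

/-! ### Positive functionals dominated by a set function -/

section PositiveFunctionals

theorem exists_linearMap_le_of_sublinear {E : Type*} [AddCommGroup E] [Module ℝ E] {P : E → ℝ}
    (hsmul : ∀ t : ℝ, 0 < t → ∀ x, P (t • x) = t * P x) (hadd : ∀ x y, P (x + y) ≤ P x + P y)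
    (x₀ : E) : ∃ L : E →ₗ[ℝ] ℝ, (∀ x, L x ≤ P x) ∧ L x₀ = P x₀ := by
  have hzero : P 0 = 0 := by
    have := hsmul 2 two_pos 0
    rw [smul_zero] at this
    linarith
  have hle (t : ℝ) : t * P x₀ ≤ P (t • x₀) := by
    rcases lt_trichotomy t 0 with ht | rfl | ht
    · have hneg := hsmul (-t) (neg_pos.2 ht) x₀
      have := hadd (t • x₀) (-t • x₀)
      rw [neg_smul, add_neg_cancel, hzero, ← neg_smul, hneg] at this
      linarith
    · simp [hzero]
    · exact (hsmul t ht x₀).ge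
  have hwd (t : ℝ) (ht : t • x₀ = 0) : t • P x₀ = 0 := by
    rcases smul_eq_zero.1 ht with rfl | rfl
    · exact zero_smul ℝ _
    · rw [hzero, smul_zero]
  obtain ⟨L, hL, hLP⟩ := exists_extension_of_le_sublinear
    (LinearPMap.mkSpanSingleton' x₀ (P x₀) hwd) P hsmul hadd (by
      rintro ⟨_, hx⟩
      obtain ⟨t, rfl⟩ := Submodule.mem_span_singleton.1 hx
      exact (LinearPMap.mkSpanSingleton'_apply _ _ _ t hx).trans_le (hle t))
  refine ⟨L, hLP, ?_⟩
  exact (hL ⟨x₀, Submodule.mem_span_singleton_self x₀⟩).trans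
    (LinearPMap.mkSpanSingleton'_apply_self _ _ _ _)

variable {Ω : Type*} [MeasurableSpace Ω] {φ : Set Ω → ℝ} {A B : Set Ω}

/-- The indicator function of `A` as a simple function; it is `0` when `A` is not measurable. -/
noncomputable def simpleIndicator (A : Set Ω) : SimpleFunc Ω ℝ :=
  (1 : SimpleFunc Ω ℝ).restrict A

theorem coe_simpleIndicator (hA : MeasurableSet A) :
    ⇑(simpleIndicator A) = A.indicator 1 :=
  SimpleFunc.coe_restrict _ hA

@[simp]
theorem simpleIndicator_univ : simpleIndicator (univ : Set Ω) = 1 :=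
  SimpleFunc.restrict_univ _

@[simp]
theorem simpleIndicator_empty : simpleIndicator (∅ : Set Ω) = 0 :=
  SimpleFunc.restrict_empty _

theorem simpleIndicator_nonneg (hA : MeasurableSet A) : 0 ≤ simpleIndicator A := fun x => by
  rw [coe_simpleIndicator hA]
  exact indicator_nonneg (fun _ _ => zero_le_one) x

theorem simpleIndicator_union (hA : MeasurableSet A) (hB : MeasurableSet B) (hAB : Disjoint A B) :
    simpleIndicator (A ∪ B) = simpleIndicator A + simpleIndicator B := by
  apply SimpleFunc.coe_injective
  rw [SimpleFunc.coe_add, coe_simpleIndicator hA, coe_simpleIndicator hB,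
    coe_simpleIndicator (hA.union hB), indicator_union_of_disjoint hAB]
  rfl

theorem exists_positiveLinearMap_le_eq_coverCost (hφ : 0 ≤ φ) :
    ∃ L : SimpleFunc Ω ℝ →ₚ[ℝ] ℝ, (∀ A, MeasurableSet A → L (simpleIndicator A) ≤ φ A) ∧
      L 1 = coverCost φ 1 := by
  obtain ⟨L, hLle, hL1⟩ := exists_linearMap_le_of_sublinear
    (P := fun g : SimpleFunc Ω ℝ => coverCost φ g) (fun t ht g => coverCost_smul hφ ht g)
    (coverCost_add_le hφ) 1
  refine ⟨PositiveLinearMap.mk₀ L fun g hg => ?_, fun A hA => ?_, hL1⟩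
  · have := (hLle (-g)).trans (coverCost_le hφ (.zero (neg_nonpos.2 hg)))
    rwa [map_neg, map_zero, neg_nonpos] at this
  · have hcover : IsFractionalCover (Finsupp.single A 1) (simpleIndicator A) :=
      .single hA zero_le_one (by rw [one_smul, coe_simpleIndicator hA])
    change L (simpleIndicator A) ≤ φ A
    simpa using (hLle _).trans (coverCost_le hφ hcover)

theorem IsFractionalCover.map_le {c : Set Ω →₀ ℝ} {g : SimpleFunc Ω ℝ}
    (hc : IsFractionalCover c g) (L : SimpleFunc Ω ℝ →ₚ[ℝ] ℝ) :
    L g ≤ Finsupp.linearCombination ℝ (fun A => L (simpleIndicator A)) c := by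
  have hcoe : ⇑(Finsupp.linearCombination ℝ simpleIndicator c) =
      Finsupp.linearCombination ℝ (fun A : Set Ω => A.indicator (1 : Ω → ℝ)) c := by
    let coeHom : SimpleFunc Ω ℝ →ₗ[ℝ] Ω → ℝ := ⟨⟨(⇑), SimpleFunc.coe_add⟩, SimpleFunc.coe_smul⟩
    refine (Finsupp.apply_linearCombination ℝ coeHom simpleIndicator c).trans ?_
    exact Finsupp.sum_congr fun A hA =>
      congrArg (c A • ·) (coe_simpleIndicator (hc.measurableSet A hA))
  have hle : ⇑g ≤ Finsupp.linearCombination ℝ simpleIndicator c := hc.le.trans_eq hcoe.symm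
  calc L g ≤ L (Finsupp.linearCombination ℝ simpleIndicator c) := L.monotone' hle
    _ = Finsupp.linearCombination ℝ (fun A => L (simpleIndicator A)) c :=
      Finsupp.apply_linearCombination ℝ L.toLinearMap simpleIndicator c

end PositiveFunctionals

/-! ### Linear programming duality and greedy exhaustion -/

section Duality

variable {Ω : Type*} [MeasurableSpace Ω] {φ : Set Ω → ℝ} {c d : Set Ω →₀ ℝ} {A E S : Set Ω} {s : ℝ}

theorem IsFractionalCover.exists_mem (hc : IsFractionalCover c 1) (x : Ω) :
    ∃ A ∈ c.support, x ∈ A := by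
  by_contra! h
  have hle := hc.le x
  rw [linearCombination_indicator_apply, Finsupp.sum, Finset.sum_eq_zero] at hle
  · exact not_le.2 zero_lt_one hle
  · intro A hA
    simp [h A hA]

/-- The fractional cover `c` of the constant function `1` and the positive functional `L` below `φ`
are optimal solutions of two dual linear programs. -/
structure IsOptimalPair (φ : Set Ω → ℝ) (c : Set Ω →₀ ℝ) (L : SimpleFunc Ω ℝ →ₚ[ℝ] ℝ) : Prop where
  isFractionalCover : IsFractionalCover c 1
  le : ∀ A, MeasurableSet A → L (simpleIndicator A) ≤ φ A
  cost_eq : Finsupp.linearCombination ℝ φ c = L 1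

theorem map_simpleIndicator_nonneg (L : SimpleFunc Ω ℝ →ₚ[ℝ] ℝ) (hA : MeasurableSet A) :
    0 ≤ L (simpleIndicator A) :=
  map_nonneg L (simpleIndicator_nonneg hA)

theorem map_one_nonneg (L : SimpleFunc Ω ℝ →ₚ[ℝ] ℝ) : 0 ≤ L 1 := by
  rw [← simpleIndicator_univ]
  exact map_simpleIndicator_nonneg L .univ

theorem map_simpleIndicator_inter_add_diff (L : SimpleFunc Ω ℝ →ₚ[ℝ] ℝ) (hA : MeasurableSet A)
    (hE : MeasurableSet E) :
    L (simpleIndicator (A ∩ E)) + L (simpleIndicator (A \ E)) = L (simpleIndicator A) := by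
  rw [← map_add, ← simpleIndicator_union (hA.inter hE) (hA.diff hE) disjoint_sdiff_inter.symm,
    inter_union_sdiff]

namespace IsOptimalPair

variable {L : SimpleFunc Ω ℝ →ₚ[ℝ] ℝ}

theorem eq_of_mem_support (h : IsOptimalPair φ c L) (hS : S ∈ c.support) :
    L (simpleIndicator S) = φ S := by
  have hle : ∀ A ∈ c.support, c A • L (simpleIndicator A) ≤ c A • φ A := fun A hA =>
    smul_le_smul_of_nonneg_left (h.le A (h.isFractionalCover.measurableSet A hA))
      (h.isFractionalCover.nonneg A)
  have hsum : ∑ A ∈ c.support, c A • L (simpleIndicator A) = ∑ A ∈ c.support, c A • φ A :=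
    (Finset.sum_le_sum hle).antisymm <|
      h.cost_eq.trans_le (IsFractionalCover.map_le (g := 1) h.isFractionalCover L)
  exact smul_right_injective ℝ (Finsupp.mem_support_iff.1 hS)
    ((Finset.sum_eq_sum_iff_of_le hle).1 hsum S hS)

theorem apply_inter_rpow_le (h : IsOptimalPair φ c L) (hφ : HasLowerEstimate s φ) (hs : 0 ≤ s)
    (hE : MeasurableSet E) (hS : S ∈ c.support) :
    φ (E ∩ S) ^ s ≤ L (simpleIndicator S) ^ s -
      (L (simpleIndicator S) - L (simpleIndicator (E ∩ S))) ^ s := by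
  have hSm : MeasurableSet S := h.isFractionalCover.measurableSet S hS
  have hlower := hφ (hSm.inter hE) (hSm.diff hE) disjoint_sdiff_inter.symm
  rw [inter_union_sdiff, ← h.eq_of_mem_support hS] at hlower
  have hdiff : L (simpleIndicator (S \ E)) ^ s ≤ φ (S \ E) ^ s :=
    Real.rpow_le_rpow (map_simpleIndicator_nonneg L (hSm.diff hE)) (h.le _ (hSm.diff hE)) hs
  rw [inter_comm E, ← map_simpleIndicator_inter_add_diff L hSm hE, add_sub_cancel_left,
    map_simpleIndicator_inter_add_diff L hSm hE]
  linarith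

theorem map_le_linearCombination_inter (h : IsOptimalPair φ c L) (hE : MeasurableSet E) :
    L (simpleIndicator E) ≤
      Finsupp.linearCombination ℝ (fun S => L (simpleIndicator (E ∩ S))) c := by
  have hcover : IsFractionalCover (c.mapDomain (E ∩ ·)) ⇑(simpleIndicator E) := by
    refine h.isFractionalCover.mapDomain
      (fun A hA => hE.inter (h.isFractionalCover.measurableSet A hA)) fun x => ?_
    rw [coe_simpleIndicator hE, linearCombination_indicator_apply]
    by_cases hx : x ∈ E
    · have hle := h.isFractionalCover.le x
      rw [linearCombination_indicator_apply] at hle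
      rw [indicator_of_mem hx]
      exact hle.trans_eq (Finsupp.sum_congr fun A _ => by
        rw [← indicator_indicator, indicator_of_mem hx])
    · simp [hx]
  have := hcover.map_le L
  rwa [Finsupp.linearCombination_mapDomain] at this

/-- If the inequality failed for every `S`, averaging it with the weights `c S` would contradict
`map_le_linearCombination_inter` and `IsOptimalPair.cost_eq`. -/
theorem exists_mem_support_mul_le_mul (h : IsOptimalPair φ c L) (hE : MeasurableSet E)
    (hpos : 0 < L (simpleIndicator E)) :
    ∃ S ∈ c.support, 0 < L (simpleIndicator (E ∩ S)) ∧
      L (simpleIndicator E) * L (simpleIndicator S) ≤ L 1 * L (simpleIndicator (E ∩ S)) := by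
  classical
  have hcover := h.map_le_linearCombination_inter hE
  have hnonneg (S) (hS : S ∈ c.support) : 0 ≤ L (simpleIndicator (E ∩ S)) :=
    map_simpleIndicator_nonneg L (hE.inter (h.isFractionalCover.measurableSet S hS))
  set T := {S ∈ c.support | 0 < L (simpleIndicator (E ∩ S))}
  have hsumT : Finsupp.linearCombination ℝ (fun S => L (simpleIndicator (E ∩ S))) c =
      ∑ S ∈ T, c S * L (simpleIndicator (E ∩ S)) := by
    refine (Finset.sum_filter_of_ne fun S hS hne => ?_).symm
    exact (hnonneg S hS).lt_of_ne' (right_ne_zero_of_smul hne)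
  have hTne : T.Nonempty := Finset.nonempty_of_sum_ne_zero (hsumT ▸ (hpos.trans_le hcover)).ne'
  obtain ⟨S, hST, hS⟩ := Finset.exists_le_of_sum_le hTne <| calc
    ∑ S ∈ T, c S * (L (simpleIndicator E) * L (simpleIndicator S))
      ≤ ∑ S ∈ c.support, c S * (L (simpleIndicator E) * L (simpleIndicator S)) := by
        refine Finset.sum_le_sum_of_subset_of_nonneg (Finset.filter_subset _ _) fun S hS _ => ?_
        exact mul_nonneg (h.isFractionalCover.nonneg S) (mul_nonneg hpos.le
          (map_simpleIndicator_nonneg L (h.isFractionalCover.measurableSet S hS)))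
    _ = L (simpleIndicator E) * L 1 := by
        rw [← h.cost_eq, Finsupp.linearCombination_apply, Finsupp.sum, Finset.mul_sum]
        refine Finset.sum_congr rfl fun S hS => ?_
        rw [h.eq_of_mem_support hS, smul_eq_mul]
        ring
    _ ≤ L 1 * ∑ S ∈ T, c S * L (simpleIndicator (E ∩ S)) := by
        rw [mul_comm, ← hsumT]
        exact mul_le_mul_of_nonneg_left hcover (map_one_nonneg L)
    _ = ∑ S ∈ T, c S * (L 1 * L (simpleIndicator (E ∩ S))) := by
        rw [Finset.mul_sum]
        exact Finset.sum_congr rfl fun S _ => mul_left_comm _ _ _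
  obtain ⟨hSc, hSpos⟩ := Finset.mem_filter.1 hST
  exact ⟨S, hSc, hSpos, le_of_mul_le_mul_left hS <|
    (h.isFractionalCover.nonneg S).lt_of_ne' (Finsupp.mem_support_iff.1 hSc)⟩

theorem exists_greedy_step (h : IsOptimalPair φ c L) (hφ0 : 0 ≤ φ) (hφ : HasLowerEstimate s φ)
    (hs : 1 ≤ s) (hE : MeasurableSet E) (hne : E.Nonempty) :
    ∃ S ∈ c.support, (E ∩ S).Nonempty ∧
      φ (E ∩ S) + greedyPotential s (L 1) (L (simpleIndicator (E \ S))) ≤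
        greedyPotential s (L 1) (L (simpleIndicator E)) := by
  have hs0 : 0 < s := zero_lt_one.trans_le hs
  rcases (map_simpleIndicator_nonneg L hE).eq_or_lt with hzero | hpos
  · obtain ⟨x, hx⟩ := hne
    obtain ⟨S, hS, hxS⟩ := h.isFractionalCover.exists_mem x
    have hSm := h.isFractionalCover.measurableSet S hS
    have hsplit := map_simpleIndicator_inter_add_diff L hE hSm
    have hinter : L (simpleIndicator (E ∩ S)) = 0 := by
      linarith [map_simpleIndicator_nonneg L (hE.inter hSm),
        map_simpleIndicator_nonneg L (hE.diff hSm)]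
    have hdiff : L (simpleIndicator (E \ S)) = 0 := by linarith
    have hnull := h.apply_inter_rpow_le hφ hs0.le hE hS
    rw [hinter, sub_zero, sub_self] at hnull
    refine ⟨S, hS, ⟨x, hx, hxS⟩, ?_⟩
    rw [hdiff, ← hzero, greedyPotential_zero hs0.ne', add_zero]
    exact ((Real.rpow_eq_zero (hφ0 _) hs0.ne').1
      (hnull.antisymm (Real.rpow_nonneg (hφ0 _) s))).le
  · obtain ⟨S, hS, hSpos, hSle⟩ := h.exists_mem_support_mul_le_mul hE hpos
    have hSm := h.isFractionalCover.measurableSet S hS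
    have hsplit := map_simpleIndicator_inter_add_diff L hE hSm
    have hsplit' := map_simpleIndicator_inter_add_diff L hSm hE
    rw [inter_comm S E] at hsplit'
    refine ⟨S, hS, nonempty_iff_ne_empty.2 fun h0 => by simp [h0] at hSpos, ?_⟩
    rw [← sub_eq_of_eq_add' hsplit.symm]
    exact add_greedyPotential_sub_le hs (map_one_nonneg L) hpos hSpos
      (by linarith [map_simpleIndicator_nonneg L (hSm.diff hE)])
      (by linarith [map_simpleIndicator_nonneg L (hE.diff hSm)]) hSle (hφ0 _)
      (h.apply_inter_rpow_le hφ hs0.le hE hS)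

theorem apply_le_greedyPotential (h : IsOptimalPair φ c L) (hφ0 : 0 ≤ φ)
    (hφsub : SubadditiveOnMeasurable φ) (hφ : HasLowerEstimate s φ) (hs : 1 ≤ s)
    (hE : MeasurableSet E) : φ E ≤ greedyPotential s (L 1) (L (simpleIndicator E)) := by
  classical
  have hs0 : 0 < s := zero_lt_one.trans_le hs
  suffices H : ∀ (T : Finset (Set Ω)) (E : Set Ω), MeasurableSet E →
      (∀ S ∈ c.support, (E ∩ S).Nonempty → S ∈ T) →
      φ E ≤ greedyPotential s (L 1) (L (simpleIndicator E)) from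
    H c.support E hE fun S hS _ => hS
  intro T
  induction T using Finset.strongInduction with
  | H T ih =>
    intro E hE hT
    rcases E.eq_empty_or_nonempty with rfl | hne
    · rw [hφ.apply_empty hs0.ne' hφ0, simpleIndicator_empty, map_zero,
        greedyPotential_zero hs0.ne']
    obtain ⟨S, hS, hES, hstep⟩ := h.exists_greedy_step hφ0 hφ hs hE hne
    have hSm := h.isFractionalCover.measurableSet S hS
    have hrest := ih (T.erase S) (Finset.erase_ssubset (hT S hS hES)) (E \ S) (hE.diff hSm)
      fun S' hS' hne' => Finset.mem_erase.2 ⟨by rintro rfl; simp at hne',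
        hT S' hS' (hne'.mono (inter_subset_inter_left _ sdiff_subset))⟩
    calc φ E ≤ φ (E ∩ S) + φ (E \ S) := by
          simpa only [inter_union_sdiff] using hφsub (hE.inter hSm) (hE.diff hSm)
      _ ≤ φ (E ∩ S) + greedyPotential s (L 1) (L (simpleIndicator (E \ S))) := by gcongr
      _ ≤ greedyPotential s (L 1) (L (simpleIndicator E)) := hstep

end IsOptimalPair

theorem IsFractionalCover.truncate (hc : IsFractionalCover c 1) :
    IsFractionalCover (c.mapRange (min 1) (min_eq_right zero_le_one)) 1 where
  nonneg A := le_min zero_le_one (hc.nonneg A)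
  measurableSet A hA := hc.measurableSet A (Finsupp.support_mapRange hA)
  le x := by
    have hle := hc.le x
    rw [linearCombination_indicator_apply] at hle ⊢
    rw [Finsupp.sum_mapRange_index fun A => zero_mul _]
    have hterm (A : Set Ω) : 0 ≤ min 1 (c A) * A.indicator (1 : Ω → ℝ) x :=
      mul_nonneg (le_min zero_le_one (hc.nonneg A)) (indicator_nonneg (fun _ _ => zero_le_one) x)
    by_cases hbig : ∃ A ∈ c.support, x ∈ A ∧ 1 ≤ c A
    · obtain ⟨A, hA, hxA, hcA⟩ := hbig
      refine le_trans ?_ (Finset.single_le_sum (fun B _ => hterm B) hA)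
      simp [hxA, hcA]
    · push Not at hbig
      refine hle.trans_eq (Finset.sum_congr rfl fun A hA => ?_)
      by_cases hxA : x ∈ A
      · simp only [min_eq_right (hbig A hA hxA).le]
      · simp [hxA]

end Duality

section Finite

variable {α : Type*} [Finite α] [MeasurableSpace α] [DiscreteMeasurableSpace α] {φ : Set α → ℝ}
  {s : ℝ}

theorem exists_isFractionalCover_cost_eq_coverCost (hφ : 0 ≤ φ) :
    ∃ c, IsFractionalCover c 1 ∧ Finsupp.linearCombination ℝ φ c = coverCost φ 1 := by
  let e := (Finsupp.linearEquivFunOnFinite ℝ ℝ (Set α)).symm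
  let K : Set (Set α → ℝ) := Icc 0 1 ∩
    {w | 1 ≤ Finsupp.linearCombination ℝ (fun A : Set α => A.indicator (1 : α → ℝ)) (e w)}
  have hKcover : ∀ w ∈ K, IsFractionalCover (e w) 1 := fun w hw =>
    ⟨hw.1.1, fun _ _ => .of_discrete, hw.2⟩
  have hK : IsCompact K := isCompact_Icc.inter_right <| isClosed_le continuous_const <|
    (Finsupp.linearCombination ℝ _ ∘ₗ e.toLinearMap).continuous_of_finiteDimensional
  have hmemK {c} (hc : IsFractionalCover c 1) :
      e.symm (c.mapRange (min 1) (min_eq_right zero_le_one)) ∈ K :=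
    ⟨⟨hc.truncate.nonneg, fun A => min_le_left _ _⟩,
      hc.truncate.le.trans_eq (by rw [e.apply_symm_apply])⟩
  obtain ⟨c₀, hc₀⟩ := IsFractionalCover.exists_of_simpleFunc (1 : SimpleFunc α ℝ)
  obtain ⟨w, hwK, hw⟩ := hK.exists_isMinOn ⟨_, hmemK hc₀⟩
    (Finsupp.linearCombination ℝ φ ∘ₗ e.toLinearMap).continuous_of_finiteDimensional.continuousOn
  refine ⟨e w, hKcover w hwK, le_antisymm ?_ (coverCost_le hφ (hKcover w hwK))⟩
  refine le_coverCost (1 : SimpleFunc α ℝ) fun c hc => (hw (hmemK hc)).trans ?_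
  simp only [LinearMap.comp_apply, LinearEquiv.coe_coe, e.apply_symm_apply]
  exact linearCombination_mono hφ fun A => min_le_right _ _

theorem apply_univ_le_coverCost_of_finite (hφ0 : 0 ≤ φ) (hφsub : SubadditiveOnMeasurable φ)
    (hφ : HasLowerEstimate s φ) (hs : 1 ≤ s) : φ univ ≤ s ^ (1 + 1 / s) * coverCost φ 1 := by
  obtain ⟨c, hc, hcost⟩ := exists_isFractionalCover_cost_eq_coverCost hφ0
  obtain ⟨L, hLφ, hL⟩ := exists_positiveLinearMap_le_eq_coverCost hφ0
  have hopt : IsOptimalPair φ c L := ⟨hc, hLφ, hcost.trans hL.symm⟩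
  have := hopt.apply_le_greedyPotential hφ0 hφsub hφ hs .univ
  rwa [simpleIndicator_univ, greedyPotential_self (map_one_nonneg L), hL] at this

end Finite

section Transfer

variable {Ω : Type*} [MeasurableSpace Ω] {φ : Set Ω → ℝ} {s : ℝ}

theorem apply_univ_le_coverCost (hφ0 : 0 ≤ φ) (hφsub : SubadditiveOnMeasurable φ)
    (hφ : HasLowerEstimate s φ) (hs : 1 ≤ s) : φ univ ≤ s ^ (1 + 1 / s) * coverCost φ 1 := by
  have hs0 : 0 < s ^ (1 + 1 / s) := Real.rpow_pos_of_pos (zero_lt_one.trans_le hs) _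
  rw [← div_le_iff₀' hs0]
  refine le_coverCost (1 : SimpleFunc Ω ℝ) fun c hc => ?_
  rw [div_le_iff₀' hs0]
  let T : Ω → range (fun (x : Ω) (A : c.support) => x ∈ A.1) := rangeFactorization _
  let F (A : Set Ω) : Set (range fun (x : Ω) (A : c.support) => x ∈ A.1) :=
    {t | ∃ hA : A ∈ c.support, t.1 ⟨A, hA⟩}
  have hT : Measurable T := Measurable.subtype_mk <| measurable_pi_iff.2 fun A : c.support =>
    measurableSet_setOfPred.1 (hc.measurableSet A.1 A.2)
  have hF (A) (hA : A ∈ c.support) : T ⁻¹' F A = A := by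
    ext x
    exact ⟨fun ⟨_, hx⟩ => hx, fun hx => ⟨hA, hx⟩⟩
  have hcover : IsFractionalCover (c.mapDomain F) 1 := by
    refine hc.mapDomain (fun _ _ => .of_discrete) ?_
    rintro ⟨_, x, rfl⟩
    have hle := hc.le x
    rw [linearCombination_indicator_apply] at hle ⊢
    refine hle.trans_eq (Finset.sum_congr rfl fun A hA => ?_)
    have hpre : (T ⁻¹' F A).indicator (1 : Ω → ℝ) x = (F A).indicator 1 (T x) := rfl
    rw [hF A hA] at hpre
    exact congrArg (c A * ·) hpre
  calc φ univ ≤ s ^ (1 + 1 / s) * coverCost (fun S => φ (T ⁻¹' S)) 1 :=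
        apply_univ_le_coverCost_of_finite (fun S => hφ0 (T ⁻¹' S)) (hφsub.preimage hT)
          (hφ.preimage hT) hs
    _ ≤ s ^ (1 + 1 / s) * Finsupp.linearCombination ℝ (fun S => φ (T ⁻¹' S)) (c.mapDomain F) := by
        gcongr
        exact coverCost_le (fun S => hφ0 (T ⁻¹' S)) hcover
    _ = s ^ (1 + 1 / s) * Finsupp.linearCombination ℝ φ c := by
        rw [Finsupp.linearCombination_mapDomain]
        exact congrArg _ (Finsupp.sum_congr fun A hA => congrArg (c A • φ ·) (hF A hA))

end Transfer

/-! ### Measures dominated by a set function -/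

section Measures

variable {Ω : Type*} [MeasurableSpace Ω]

/-- Order continuity of a set function at `∅`, along decreasing sequences of measurable sets; the
values may be real or extended. -/
def ContinuousAtEmpty {R : Type*} [Zero R] [TopologicalSpace R] (φ : Set Ω → R) : Prop :=
  ∀ ⦃A : ℕ → Set Ω⦄, (∀ n, MeasurableSet (A n)) → Antitone A → ⋂ n, A n = ∅ →
    Tendsto (fun n => φ (A n)) atTop (𝓝 0)

theorem exists_measure_eq_ofReal_map_simpleIndicator (L : SimpleFunc Ω ℝ →ₚ[ℝ] ℝ)
    (hL : ContinuousAtEmpty fun A => L (simpleIndicator A)) :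
    ∃ μ : Measure Ω, ∀ A, MeasurableSet A → μ A = ENNReal.ofReal (L (simpleIndicator A)) := by
  have hring : IsSetRing {A : Set Ω | MeasurableSet A} :=
    { empty_mem := .empty
      union_mem := fun _ _ hA hB => hA.union hB
      sdiff_mem := fun _ _ hA hB => hA.diff hB }
  have hempty : ENNReal.ofReal (L (simpleIndicator ∅)) = 0 := by
    rw [simpleIndicator_empty, map_zero, ENNReal.ofReal_zero]
  let m : AddContent ℝ≥0∞ {A : Set Ω | MeasurableSet A} :=
    hring.addContent_of_union (fun A => ENNReal.ofReal (L (simpleIndicator A))) hempty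
      fun hA hB hAB => by
        rw [simpleIndicator_union hA hB hAB, map_add,
          ENNReal.ofReal_add (map_simpleIndicator_nonneg L hA) (map_simpleIndicator_nonneg L hB)]
  have hiUnion := addContent_iUnion_eq_sum_of_tendsto_zero hring m
    (fun _ _ => ENNReal.ofReal_ne_top) fun A hA hanti hinter => by
      rw [← ENNReal.ofReal_zero]
      exact ENNReal.tendsto_ofReal (hL hA hanti hinter)
  exact ⟨.ofMeasurable (fun A _ => ENNReal.ofReal (L (simpleIndicator A))) hempty
    fun A hA hdisj => hiUnion hA (.iUnion hA) hdisj, fun A hA => Measure.ofMeasurable_apply A hA⟩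

theorem exists_measure_le_of_hasLowerEstimate {φ : Set Ω → ℝ} {s : ℝ} (hs : 1 ≤ s) (hφ0 : 0 ≤ φ)
    (hφsub : SubadditiveOnMeasurable φ) (hφ : HasLowerEstimate s φ) (hφcont : ContinuousAtEmpty φ) :
    ∃ μ : Measure Ω, ENNReal.ofReal (φ univ) ≤ ENNReal.ofReal (s ^ (1 + 1 / s)) * μ univ ∧
      ∀ A, MeasurableSet A → μ A ≤ ENNReal.ofReal (φ A) := by
  obtain ⟨L, hLφ, hL⟩ := exists_positiveLinearMap_le_eq_coverCost hφ0
  obtain ⟨μ, hμ⟩ := exists_measure_eq_ofReal_map_simpleIndicator L fun A hA hanti hinter =>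
    squeeze_zero (fun n => map_simpleIndicator_nonneg L (hA n)) (fun n => hLφ _ (hA n))
      (hφcont hA hanti hinter)
  refine ⟨μ, ?_, fun A hA => (hμ A hA).trans_le (ENNReal.ofReal_le_ofReal (hLφ A hA))⟩
  rw [hμ _ .univ, simpleIndicator_univ, hL,
    ← ENNReal.ofReal_mul (Real.rpow_nonneg (zero_le_one.trans hs) _)]
  exact ENNReal.ofReal_le_ofReal (apply_univ_le_coverCost hφ0 hφsub hφ hs)

end Measures

/-! ### The submeasure hull -/

section SubmeasureHull

variable {Ω : Type*} [MeasurableSpace Ω] {ψ : Set Ω → ℝ≥0∞} {C : ℝ≥0∞} {s : ℝ} {A : Set Ω}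

/-- Countable quasi-subadditivity with constant `C`, along disjoint sequences of measurable
sets. -/
def QuasiSubadditive (C : ℝ≥0∞) (ψ : Set Ω → ℝ≥0∞) : Prop :=
  ∀ ⦃A : ℕ → Set Ω⦄, (∀ n, MeasurableSet (A n)) → Pairwise (Function.onFun Disjoint A) →
    ψ (⋃ n, A n) ≤ C * ∑' n, ψ (A n)

/-- The largest outer measure whose values on measurable sets are at most those of `ψ`. -/
noncomputable def submeasureHull (ψ : Set Ω → ℝ≥0∞) (hψ : ψ ∅ = 0) : OuterMeasure Ω :=
  inducedOuterMeasure (fun A (_ : MeasurableSet A) => ψ A) .empty hψ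

theorem submeasureHull_le (hψ : ψ ∅ = 0) (hA : MeasurableSet A) : submeasureHull ψ hψ A ≤ ψ A :=
  le_inducedOuterMeasure.1 (le_refl (submeasureHull ψ hψ)) A hA

theorem le_submeasureHull {t : ℝ≥0∞} (hψ : ψ ∅ = 0)
    (h : ∀ B : ℕ → Set Ω, (∀ n, MeasurableSet (B n)) → A ⊆ ⋃ n, B n → t ≤ ∑' n, ψ (B n)) :
    t ≤ submeasureHull ψ hψ A := by
  rw [submeasureHull, inducedOuterMeasure,
    OuterMeasure.ofFunction_eq_iInf_mem _ _ fun B hB => extend_eq_top _ hB]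
  refine le_iInf₂ fun B hB => le_iInf fun hAB => (h B hB hAB).trans_eq ?_
  exact tsum_congr fun n => (extend_eq (fun A _ => ψ A) (hB n)).symm

theorem submeasureHull_le_tsum_inter (hψ : ψ ∅ = 0) (hA : MeasurableSet A) {B : ℕ → Set Ω}
    (hB : ∀ n, MeasurableSet (B n)) (hAB : A ⊆ ⋃ n, B n) :
    submeasureHull ψ hψ A ≤ ∑' n, ψ (B n ∩ A) :=
  calc submeasureHull ψ hψ A = submeasureHull ψ hψ (⋃ n, B n ∩ A) := by
        rw [← iUnion_inter, inter_eq_right.2 hAB]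
    _ ≤ ∑' n, submeasureHull ψ hψ (B n ∩ A) := measure_iUnion_le _
    _ ≤ ∑' n, ψ (B n ∩ A) :=
        ENNReal.tsum_le_tsum fun n => submeasureHull_le hψ ((hB n).inter hA)

theorem subadditiveOnMeasurable_submeasureHull (hψ : ψ ∅ = 0) :
    SubadditiveOnMeasurable (submeasureHull ψ hψ) :=
  fun A B _ _ => measure_union_le A B

theorem hasLowerEstimate_submeasureHull (hψ : HasLowerEstimate s ψ) (hs : 1 ≤ s) (hψ0 : ψ ∅ = 0) :
    HasLowerEstimate s (submeasureHull ψ hψ0) := by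
  have hs0 : 0 < s := zero_lt_one.trans_le hs
  intro A₁ A₂ hA₁ hA₂ hdisj
  rw [← ENNReal.rpow_inv_le_iff hs0, ← one_div]
  refine le_submeasureHull hψ0 fun B hB hAB => ?_
  have hle (n : ℕ) : (ψ (B n ∩ A₁) ^ s + ψ (B n ∩ A₂) ^ s) ^ (1 / s) ≤ ψ (B n) := by
    rw [one_div, ENNReal.rpow_inv_le_iff hs0]
    refine (hψ ((hB n).inter hA₁) ((hB n).inter hA₂)
      (hdisj.mono inter_subset_right inter_subset_right)).trans ?_
    rw [← inter_union_distrib_left]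
    exact ENNReal.rpow_le_rpow
      (hψ.mono hs0 ((hB n).inter (hA₁.union hA₂)) (hB n) inter_subset_left) hs0.le
  have hmink := Lp_tsum_le_tsum_Lp hs (Finset.univ : Finset (Fin 2))
    ![fun n => ψ (B n ∩ A₁), fun n => ψ (B n ∩ A₂)]
  simp only [Fin.sum_univ_two, Matrix.cons_val_zero, Matrix.cons_val_one] at hmink
  calc _ ≤ ((∑' n, ψ (B n ∩ A₁)) ^ s + (∑' n, ψ (B n ∩ A₂)) ^ s) ^ (1 / s) := by
        gcongr
        · exact submeasureHull_le_tsum_inter hψ0 hA₁ hB (subset_union_left.trans hAB)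
        · exact submeasureHull_le_tsum_inter hψ0 hA₂ hB (subset_union_right.trans hAB)
    _ ≤ ∑' n, (ψ (B n ∩ A₁) ^ s + ψ (B n ∩ A₂) ^ s) ^ (1 / s) := hmink
    _ ≤ ∑' n, ψ (B n) := ENNReal.tsum_le_tsum hle

theorem QuasiSubadditive.apply_univ_le_mul_submeasureHull (hψC : QuasiSubadditive C ψ)
    (hC : C ≠ ⊤) (hψ : HasLowerEstimate s ψ) (hs : 0 < s) (hψ0 : ψ ∅ = 0) (hψtop : ψ univ ≠ ⊤) :
    ψ univ ≤ C * submeasureHull ψ hψ0 univ := by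
  rw [mul_comm, ← ENNReal.div_le_iff_le_mul
    (.inr (ne_top_of_le_ne_top hψtop (submeasureHull_le hψ0 .univ))) (.inl hC)]
  refine le_submeasureHull hψ0 fun B hB hcover => ENNReal.div_le_of_le_mul' ?_
  calc ψ univ = ψ (⋃ n, disjointed B n) := by
        rw [iUnion_disjointed, univ_subset_iff.1 hcover]
    _ ≤ C * ∑' n, ψ (disjointed B n) :=
        hψC (fun n => .disjointed hB n) (disjoint_disjointed B)
    _ ≤ C * ∑' n, ψ (B n) := by
        gcongr with n
        exact hψ.mono hs (.disjointed hB n) (hB n) (disjointed_subset B n)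

theorem exists_isProbabilityMeasure_mul_le (hs : 1 ≤ s) (hC : C ≠ ⊤) (hψuniv : ψ univ ≠ 0)
    (hψtop : ψ univ ≠ ⊤) (hψ0 : ψ ∅ = 0) (hψC : QuasiSubadditive C ψ)
    (hψ : HasLowerEstimate s ψ) (hψcont : ContinuousAtEmpty ψ) :
    ∃ μ : Measure Ω, IsProbabilityMeasure μ ∧
      ∀ A, MeasurableSet A → ψ univ * μ A ≤ C * ENNReal.ofReal (s ^ (1 + 1 / s)) * ψ A := by
  have hs0 : 0 < s := zero_lt_one.trans_le hs
  set φ := submeasureHull ψ hψ0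
  have hφtop (A : Set Ω) : φ A ≠ ⊤ := ne_top_of_le_ne_top hψtop
    ((measure_mono (subset_univ A)).trans (submeasureHull_le hψ0 .univ))
  have hφcont : ContinuousAtEmpty fun A => (φ A).toReal := fun A hA hanti hinter => by
    rw [← ENNReal.toReal_zero]
    exact (ENNReal.tendsto_toReal ENNReal.zero_ne_top).comp <|
      tendsto_of_tendsto_of_tendsto_of_le_of_le tendsto_const_nhds (hψcont hA hanti hinter)
        (fun n => zero_le) fun n => submeasureHull_le hψ0 (hA n)
  obtain ⟨ν, hν, hνφ⟩ := exists_measure_le_of_hasLowerEstimate (φ := fun A => (φ A).toReal) hs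
    (fun A => ENNReal.toReal_nonneg) ((subadditiveOnMeasurable_submeasureHull hψ0).toReal hφtop)
    ((hasLowerEstimate_submeasureHull hψ hs hψ0).toReal hs0.le hφtop) hφcont
  simp only [ENNReal.ofReal_toReal (hφtop _)] at hν hνφ
  have hψν : ψ univ ≤ C * ENNReal.ofReal (s ^ (1 + 1 / s)) * ν univ := by
    rw [mul_assoc]
    exact (hψC.apply_univ_le_mul_submeasureHull hC hψ hs0 hψ0 hψtop).trans (by gcongr)
  have hν0 : ν univ ≠ 0 := fun h => hψuniv (le_zero_iff.1 (hψν.trans_eq (by rw [h, mul_zero])))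
  have : NeZero ν := ⟨fun h => hν0 (by rw [h, Measure.coe_zero, Pi.zero_apply])⟩
  have : IsFiniteMeasure ν := ⟨((hνφ _ .univ).trans_lt (hφtop univ).lt_top)⟩
  refine ⟨(ν univ)⁻¹ • ν, inferInstance, fun A hA => ?_⟩
  calc ψ univ * ((ν univ)⁻¹ * ν A)
      ≤ C * ENNReal.ofReal (s ^ (1 + 1 / s)) * ν univ * ((ν univ)⁻¹ * ν A) := by gcongr
    _ = C * ENNReal.ofReal (s ^ (1 + 1 / s)) * ν A := by
        rw [mul_assoc, ENNReal.mul_inv_cancel_left hν0 (measure_ne_top ν univ)]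
    _ ≤ C * ENNReal.ofReal (s ^ (1 + 1 / s)) * ψ A := by
        gcongr
        exact (hνφ A hA).trans (submeasureHull_le hψ0 hA)

end SubmeasureHull

/-! ### The power variation of a set function -/

section PowerVariation

variable {Ω : Type*} [MeasurableSpace Ω] {ψ χ : Set Ω → ℝ≥0∞} {A B : Set Ω} {s : ℝ}

/-- Order continuity of a set function along increasing sequences of measurable sets. -/
def ContinuousFromBelow (φ : Set Ω → ℝ≥0∞) : Prop :=
  ∀ ⦃A : ℕ → Set Ω⦄, (∀ n, MeasurableSet (A n)) → Monotone A →
    Tendsto (fun n => φ (A n)) atTop (𝓝 (φ (⋃ n, A n)))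

theorem HasLowerEstimate.continuousAtEmpty (hψ : HasLowerEstimate s ψ) (hs : 0 < s)
    (hcont : ContinuousFromBelow ψ) (hfin : ψ univ ≠ ⊤) : ContinuousAtEmpty ψ := by
  intro A hA hanti hinter
  have hpowfin {x : ℝ≥0∞} (hx : x ≤ ψ univ) : x ^ s ≠ ⊤ :=
    ENNReal.rpow_ne_top_of_nonneg hs.le (ne_top_of_le_ne_top hfin hx)
  have hcompl : Tendsto (fun n => ψ (A n)ᶜ) atTop (𝓝 (ψ univ)) := by
    have h := hcont (fun n => (hA n).compl) fun _ _ hmn => compl_subset_compl.2 (hanti hmn)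
    rwa [← compl_iInter, hinter, compl_empty] at h
  have hle (n : ℕ) : ψ (A n) ^ s ≤ ψ univ ^ s - ψ (A n)ᶜ ^ s := by
    refine ENNReal.le_sub_of_add_le_right
      (hpowfin (hψ.mono hs (hA n).compl .univ (subset_univ _))) ?_
    simpa only [union_compl_self] using hψ (hA n) (hA n).compl disjoint_compl_right
  have hsub : Tendsto (fun n => ψ univ ^ s - ψ (A n)ᶜ ^ s) atTop (𝓝 0) := by
    rw [← tsub_self (ψ univ ^ s)]
    exact ENNReal.Tendsto.sub tendsto_const_nhds (hcompl.ennrpow_const s) (.inl (hpowfin le_rfl))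
  have hpow := tendsto_of_tendsto_of_tendsto_of_le_of_le tendsto_const_nhds hsub
    (fun n => zero_le) hle
  simpa only [one_div, ENNReal.rpow_rpow_inv hs.ne', ENNReal.zero_rpow_of_pos (inv_pos.2 hs)] using
    hpow.ennrpow_const (1 / s)

theorem tsum_preVariationFun_le {ι : Type*} [Countable ι] {F : Set Ω → ℝ≥0∞} {A : ι → Set Ω}
    (hA : ∀ i, MeasurableSet (A i)) (hdisj : Pairwise (Function.onFun Disjoint A)) :
    ∑' i, preVariationFun F (A i) ≤ preVariationFun F (⋃ i, A i) := by
  have := Encodable.ofCountable ι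
  rw [← Encodable.iUnion_decode₂, ← tsum_iUnion_decode₂ _ (preVariation.empty F)]
  exact preVariation.sum_le_preVariationFun_iUnion F
    (fun n => .iUnion fun i => .iUnion fun _ => hA i) (Encodable.iUnion_decode₂_disjoint_on hdisj)

/-- The supremum of `(∑ B ∈ P, ψ B ^ s) ^ (1 / s)` over the finite measurable partitions `P` of a
measurable set `A`: the least set function above `ψ` which satisfies a lower `s`-estimate with
constant `1`. It has the junk value `0` when `A` is not measurable. -/
noncomputable def powerVariation (s : ℝ) (ψ : Set Ω → ℝ≥0∞) (A : Set Ω) : ℝ≥0∞ :=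
  preVariationFun (fun B => ψ B ^ s) A ^ (1 / s)

theorem powerVariation_apply (hs : 0 < s) (hA : MeasurableSet A) :
    powerVariation s ψ A = ⨆ P : Finpartition (⟨A, hA⟩ : Subtype MeasurableSet),
      (∑ B ∈ P.parts, ψ B ^ s) ^ (1 / s) := by
  rw [powerVariation, preVariationFun_apply _ hA]
  exact (ENNReal.orderIsoRpow (1 / s) (one_div_pos.2 hs)).map_iSup _

theorem powerVariation_rpow (hs : s ≠ 0) :
    powerVariation s ψ A ^ s = preVariationFun (fun B => ψ B ^ s) A := by
  rw [powerVariation, one_div, ENNReal.rpow_inv_rpow hs]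

theorem powerVariation_empty (hs : 0 < s) : powerVariation s ψ ∅ = 0 := by
  rw [powerVariation, preVariation.empty, ENNReal.zero_rpow_of_pos (one_div_pos.2 hs)]

theorem tsum_powerVariation_rpow_le {ι : Type*} [Countable ι] {A : ι → Set Ω} (hs : s ≠ 0)
    (hA : ∀ i, MeasurableSet (A i)) (hdisj : Pairwise (Function.onFun Disjoint A)) :
    ∑' i, powerVariation s ψ (A i) ^ s ≤ powerVariation s ψ (⋃ i, A i) ^ s := by
  simpa only [powerVariation_rpow hs] using tsum_preVariationFun_le hA hdisj

theorem hasLowerEstimate_powerVariation (hs : s ≠ 0) :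
    HasLowerEstimate s (powerVariation s ψ) := by
  intro A B hA hB hAB
  have h := tsum_powerVariation_rpow_le (ψ := ψ) (A := fun i => cond i A B) hs
    (Bool.rec hB hA) (pairwise_disjoint_on_bool.2 hAB)
  rwa [tsum_bool, add_comm, ← union_eq_iUnion] at h

theorem Lp_sum_inter_le_powerVariation (hs : 0 < s) (hψ : ψ ∅ = 0) (hA : MeasurableSet A)
    (hB : MeasurableSet B) (hAB : A ⊆ B) (P : Finpartition (⟨B, hB⟩ : Subtype MeasurableSet)) :
    (∑ D ∈ P.parts, ψ (D ∩ A) ^ s) ^ (1 / s) ≤ powerVariation s ψ A := by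
  have h0 : ψ ∅ ^ s = 0 := by rw [hψ, ENNReal.zero_rpow_of_pos hs]
  rw [powerVariation]
  gcongr
  have hle : (⟨A, hA⟩ : Subtype MeasurableSet) ≤ ⟨B, hB⟩ := hAB
  exact (P.sum_restrict hle (fun D => ψ D ^ s) h0).symm.trans_le
    (preVariation.sum_le _ hA (P.restrict hle))

theorem le_powerVariation (hs : 0 < s) (hψ : ψ ∅ = 0) (hA : MeasurableSet A) :
    ψ A ≤ powerVariation s ψ A := by
  rcases A.eq_empty_or_nonempty with rfl | hne
  · rw [hψ]
    exact zero_le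
  have hbot : (⟨A, hA⟩ : Subtype MeasurableSet) ≠ ⊥ := fun h =>
    hne.ne_empty (congrArg Subtype.val h)
  have h := preVariation.sum_le (fun B => ψ B ^ s) hA (.indiscrete hbot)
  rw [Finpartition.indiscrete_parts, Finset.sum_singleton, ← powerVariation_rpow hs.ne'] at h
  exact (ENNReal.rpow_le_rpow_iff hs).1 h

theorem mul_powerVariation_le {c : ℝ≥0∞} (hs : 0 < s) (hA : MeasurableSet A)
    (h : ∀ B, MeasurableSet B → B ⊆ A → c * ψ B ≤ χ B) :
    c * powerVariation s ψ A ≤ powerVariation s χ A := by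
  rw [powerVariation_apply hs hA, powerVariation_apply hs hA, ENNReal.mul_iSup]
  refine iSup_mono fun P => ?_
  rw [mul_Lp_sum hs]
  gcongr with B hB
  exact h B B.2 (P.le hB)

theorem quasiSubadditive_powerVariation {C : ℝ≥0∞} (hψC : QuasiSubadditive C ψ) (hs : 1 ≤ s)
    (hψ : ψ ∅ = 0) : QuasiSubadditive C (powerVariation s ψ) := by
  have hs0 : 0 < s := zero_lt_one.trans_le hs
  intro A hA hdisj
  rw [powerVariation_apply hs0 (.iUnion hA)]
  refine iSup_le fun P => ?_
  have hle (B) (hB : B ∈ P.parts) : ψ B ≤ ∑' n, C * ψ (B ∩ A n) := by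
    rw [ENNReal.tsum_mul_left]
    refine le_of_eq_of_le ?_ (hψC (fun n => B.2.inter (hA n)) fun m n hmn =>
      (hdisj hmn).mono inter_subset_right inter_subset_right)
    rw [← inter_iUnion, inter_eq_left.2 (P.le hB)]
  calc (∑ B ∈ P.parts, ψ B ^ s) ^ (1 / s)
      ≤ (∑ B ∈ P.parts, (∑' n, C * ψ (B ∩ A n)) ^ s) ^ (1 / s) := by
        gcongr with B hB
        exact hle B hB
    _ ≤ ∑' n, (∑ B ∈ P.parts, (C * ψ (B ∩ A n)) ^ s) ^ (1 / s) := Lp_tsum_le_tsum_Lp hs _ _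
    _ = C * ∑' n, (∑ B ∈ P.parts, ψ (B ∩ A n) ^ s) ^ (1 / s) := by
        simp only [← mul_Lp_sum hs0, ENNReal.tsum_mul_left]
    _ ≤ C * ∑' n, powerVariation s ψ (A n) := by
        gcongr with n
        exact Lp_sum_inter_le_powerVariation hs0 hψ (hA n) _ (subset_iUnion A n) P

theorem continuousFromBelow_powerVariation (hcont : ContinuousFromBelow ψ) (hs : 0 < s)
    (hψ : ψ ∅ = 0) : ContinuousFromBelow (powerVariation s ψ) := by
  intro A hA hmono
  have hVmono : Monotone fun n => powerVariation s ψ (A n) := fun m n hmn =>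
    (hasLowerEstimate_powerVariation hs.ne').mono hs (hA m) (hA n) (hmono hmn)
  have hle : powerVariation s ψ (⋃ n, A n) ≤ ⨆ n, powerVariation s ψ (A n) := by
    rw [powerVariation_apply hs (.iUnion hA)]
    refine iSup_le fun P => ?_
    have hlim : Tendsto (fun n => (∑ B ∈ P.parts, ψ (B ∩ A n) ^ s) ^ (1 / s)) atTop
        (𝓝 ((∑ B ∈ P.parts, ψ B ^ s) ^ (1 / s))) := by
      refine (tendsto_finsetSum _ fun B hB => ?_).ennrpow_const _
      have h := hcont (fun n => B.2.inter (hA n)) fun m n hmn =>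
        inter_subset_inter_right _ (hmono hmn)
      rw [← inter_iUnion, inter_eq_left.2 (P.le hB)] at h
      exact h.ennrpow_const s
    refine le_of_tendsto hlim (.of_forall fun n => le_iSup_of_le n ?_)
    exact Lp_sum_inter_le_powerVariation hs hψ (hA n) _ (subset_iUnion A n) P
  rw [le_antisymm hle (iSup_le fun n => (hasLowerEstimate_powerVariation hs.ne').mono hs (hA n)
    (.iUnion hA) (subset_iUnion A n))]
  exact tendsto_atTop_iSup hVmono

end PowerVariation

/-! ### Quasinorms with crude estimates -/

section DisjointIndicators

variable {Ω : Type*} {n : ℕ} {A : Fin n → Set Ω}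

theorem sum_indicator_eq_indicator_iUnion (hdisj : Pairwise (Function.onFun Disjoint A))
    (f : Ω → ℝ) :
    (fun x => ∑ i, (A i).indicator f x) = (⋃ i, A i).indicator f := by
  rw [← biUnion_univ, ← Finset.coe_univ]
  exact (Finset.indicator_biUnion Finset.univ A fun i _ j _ hij => hdisj hij).symm

theorem disjSupp_indicator (hdisj : Pairwise (Function.onFun Disjoint A)) (f : Ω → ℝ) :
    DisjSupp fun i => (A i).indicator f := by
  intro i j hij x
  by_cases hx : x ∈ A i
  · exact .inr (indicator_of_notMem (disjoint_left.1 (hdisj hij) hx) f)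
  · exact .inl (indicator_of_notMem hx f)

end DisjointIndicators

section Quasinorm

variable {Ω : Type*} [TopologicalSpace Ω] [MeasurableSpace Ω] {X : AdmissibleQuasinorm Ω}
  {p q a b s : ℝ} {f g : Ω → ℝ} {A : Set Ω}

theorem AdmissibleQuasinorm.N_zero (X : AdmissibleQuasinorm Ω) : X.N 0 = 0 := by
  have h := X.smul 0 0 measurable_const
  simp only [Pi.zero_apply, mul_zero, abs_zero, ENNReal.ofReal_zero, zero_mul] at h
  exact h

theorem AdmissibleQuasinorm.tendsto_N_indicator_iUnion (X : AdmissibleQuasinorm Ω)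
    (hf : Measurable f) (hf0 : 0 ≤ f) {A : ℕ → Set Ω} (hA : ∀ n, MeasurableSet (A n))
    (hmono : Monotone A) :
    Tendsto (fun n => X.N ((A n).indicator f)) atTop (𝓝 (X.N ((⋃ n, A n).indicator f))) :=
  X.cont _ _ (fun n => hf.indicator (hA n)) (hf.indicator (.iUnion hA))
    (fun _ => indicator_nonneg fun x _ => hf0 x)
    (fun n => indicator_le_indicator_of_subset (hmono n.le_succ) hf0)
    fun x => (hmono.tendsto_indicator A f x).mono_right (pure_le_nhds _)

/-- The set function `A ↦ ‖f χ_A‖ᵖ`. It turns a crude upper `p`-estimate into quasi-subadditivity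
and a crude lower `q`-estimate into a bound for its `q/p`-variation. -/
noncomputable def AdmissibleQuasinorm.powOn (X : AdmissibleQuasinorm Ω) (p : ℝ) (f : Ω → ℝ)
    (A : Set Ω) : ℝ≥0∞ :=
  X.N (A.indicator f) ^ p

theorem AdmissibleQuasinorm.powOn_empty (X : AdmissibleQuasinorm Ω) (hp : 0 < p) :
    X.powOn p f ∅ = 0 := by
  rw [powOn, indicator_empty', X.N_zero, ENNReal.zero_rpow_of_pos hp]

theorem AdmissibleQuasinorm.continuousFromBelow_powOn (X : AdmissibleQuasinorm Ω)
    (hf : Measurable f) (hf0 : 0 ≤ f) : ContinuousFromBelow (X.powOn p f) :=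
  fun _ hA hmono => (X.tendsto_N_indicator_iUnion hf hf0 hA hmono).ennrpow_const p

theorem CrudeUpper.powOn_iUnion_le (hX : CrudeUpper X p a) (hp : 0 < p) (hf : Measurable f) {n : ℕ}
    {A : Fin n → Set Ω} (hA : ∀ i, MeasurableSet (A i))
    (hdisj : Pairwise (Function.onFun Disjoint A)) :
    X.powOn p f (⋃ i, A i) ≤ ENNReal.ofReal a ^ p * ∑ i, X.powOn p f (A i) := by
  have h := hX n _ (fun i => hf.indicator (hA i)) (disjSupp_indicator hdisj f)
  rw [sum_indicator_eq_indicator_iUnion hdisj] at h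
  have hpow := ENNReal.rpow_le_rpow h hp.le
  rwa [ENNReal.mul_rpow_of_nonneg _ _ hp.le, one_div, ENNReal.rpow_inv_rpow hp.ne'] at hpow

theorem CrudeUpper.quasiSubadditive_powOn (hX : CrudeUpper X p a) (hp : 0 < p) (hf : Measurable f)
    (hf0 : 0 ≤ f) : QuasiSubadditive (ENNReal.ofReal a ^ p) (X.powOn p f) := by
  intro A hA hdisj
  have hmono : Monotone fun n => ⋃ i : Fin n, A i := fun m n hmn =>
    iUnion_subset fun i => subset_iUnion_of_subset (i.castLE hmn) subset_rfl
  have hUnion : ⋃ n, ⋃ i : Fin n, A i = ⋃ n, A n :=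
    subset_antisymm (iUnion_subset fun n => iUnion_subset fun i => subset_iUnion A i)
      (iUnion_subset fun n => subset_iUnion_of_subset (n + 1) <|
        subset_iUnion (fun i : Fin (n + 1) => A i) (Fin.last n))
  have hlim := X.continuousFromBelow_powOn (p := p) hf hf0 (fun n => .iUnion fun i : Fin n => hA i)
    hmono
  rw [hUnion] at hlim
  refine le_of_tendsto' hlim fun n => ?_
  calc _ ≤ ENNReal.ofReal a ^ p * ∑ i : Fin n, X.powOn p f (A i) :=
        hX.powOn_iUnion_le hp hf (fun i => hA i) (hdisj.comp_of_injective Fin.val_injective)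
    _ ≤ ENNReal.ofReal a ^ p * ∑' n, X.powOn p f (A n) := by
        gcongr
        rw [Fin.sum_univ_eq_sum_range fun n => X.powOn p f (A n)]
        exact ENNReal.sum_le_tsum _

theorem CrudeLower.sum_rpow_le (hX : CrudeLower X q b) (hq : 0 < q) (hg : Measurable g) {n : ℕ}
    {A : Fin n → Set Ω} (hA : ∀ i, MeasurableSet (A i))
    (hdisj : Pairwise (Function.onFun Disjoint A)) :
    ∑ i, X.N ((A i).indicator g) ^ q ≤ (ENNReal.ofReal b * X.N g) ^ q := by
  have h := hX n _ (fun i => hg.indicator (hA i)) (disjSupp_indicator hdisj g)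
  rw [sum_indicator_eq_indicator_iUnion hdisj, one_div, ENNReal.rpow_inv_le_iff hq] at h
  refine h.trans (ENNReal.rpow_le_rpow ?_ hq.le)
  gcongr
  exact X.mono _ _ (hg.indicator (.iUnion hA)) hg fun x => norm_indicator_le_norm_self g x

theorem CrudeLower.powerVariation_powOn_le (hX : CrudeLower X q b) (hp : 0 < p) (hq : 0 < q)
    (hg : Measurable g) (hA : MeasurableSet A) :
    powerVariation (q / p) (X.powOn p g) A ≤ (ENNReal.ofReal b * X.N g) ^ p := by
  rw [powerVariation_apply (div_pos hq hp) hA]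
  refine iSup_le fun P => ?_
  let e := P.parts.equivFin.symm
  have hdisj : Pairwise (Function.onFun Disjoint fun i => ((e i).1 : Set Ω)) := fun i j hij =>
    (disjoint_subtype_iff (fun _ _ hs ht => hs.inter ht) _).1
      (P.disjoint (e i).2 (e j).2 (Subtype.coe_ne_coe.2 (e.injective.ne hij)))
  rw [one_div, ENNReal.rpow_inv_le_iff (div_pos hq hp), ← ENNReal.rpow_mul,
    mul_div_cancel₀ q hp.ne']
  calc ∑ B ∈ P.parts, X.powOn p g B ^ (q / p)
      = ∑ B ∈ P.parts, X.N ((B : Set Ω).indicator g) ^ q := by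
        simp only [AdmissibleQuasinorm.powOn, ← ENNReal.rpow_mul, mul_div_cancel₀ q hp.ne']
    _ = ∑ i, X.N (((e i).1 : Set Ω).indicator g) ^ q := by
        rw [← Finset.sum_coe_sort, ← e.sum_comp]
    _ ≤ (ENNReal.ofReal b * X.N g) ^ q := hX.sum_rpow_le hq hg (fun i => (e i).1.2) hdisj

theorem AdmissibleQuasinorm.mul_powerVariation_powOn_le (X : AdmissibleQuasinorm Ω) {c : ℝ}
    (hs : 0 < s) (hp : 0 ≤ p) (hc : 0 ≤ c) (hf : Measurable f) (hg : Measurable g)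
    (hA : MeasurableSet A) (hle : ∀ x ∈ A, c * |f x| ≤ |g x|) :
    ENNReal.ofReal c ^ p * powerVariation s (X.powOn p f) A ≤
      powerVariation s (X.powOn p g) A := by
  refine mul_powerVariation_le hs hA fun B hB hBA => ?_
  have hsmul := X.smul c (B.indicator f) (hf.indicator hB)
  rw [abs_of_nonneg hc] at hsmul
  rw [powOn, powOn, ← ENNReal.mul_rpow_of_nonneg _ _ hp, ← hsmul]
  refine ENNReal.rpow_le_rpow (X.mono _ _ ((hf.indicator hB).const_mul c) (hg.indicator hB) ?_) hp
  intro x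
  by_cases hx : x ∈ B
  · simpa only [indicator_of_mem hx, abs_mul, abs_of_nonneg hc] using hle x (hBA hx)
  · simp only [indicator_of_notMem hx, mul_zero, le_refl]

theorem AdmissibleQuasinorm.iInf_rpow_mul_powerVariation_le (X : AdmissibleQuasinorm Ω)
    (hs : 0 < s) (hp : 0 < p) (hf : Measurable f) (hg : Measurable g) (hA : MeasurableSet A) :
    (⨅ x ∈ A, ENNReal.ofReal |g x / f x|) ^ p * powerVariation s (X.powOn p f) A ≤
      powerVariation s (X.powOn p g) A := by
  rcases A.eq_empty_or_nonempty with rfl | ⟨x₀, hx₀⟩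
  · rw [powerVariation_empty hs, mul_zero]
    exact zero_le
  set I := ⨅ x ∈ A, ENNReal.ofReal |g x / f x|
  have hI (x) (hx : x ∈ A) : I ≤ ENNReal.ofReal |g x / f x| := iInf₂_le x hx
  rw [← ENNReal.ofReal_toReal (ne_top_of_le_ne_top ENNReal.ofReal_ne_top (hI x₀ hx₀))]
  refine X.mul_powerVariation_powOn_le hs hp.le ENNReal.toReal_nonneg hf hg hA fun x hx => ?_
  calc I.toReal * |f x| ≤ |g x / f x| * |f x| := by
        gcongr
        exact ENNReal.toReal_le_of_le_ofReal (abs_nonneg _) (hI x hx)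
    _ ≤ |g x| := by
        rcases eq_or_ne (f x) 0 with hfx | hfx
        · rw [hfx, abs_zero, mul_zero]
          exact abs_nonneg _
        · rw [← abs_mul, div_mul_cancel₀ _ hfx]

theorem CrudeLower.lambdaSup_div_le (hX : CrudeLower X q b) (hp : 0 < p) (hq : 0 < q)
    (hf : Measurable f) (hg : Measurable g) {μ : Measure Ω} {D : ℝ≥0∞}
    (hμ : ∀ A, MeasurableSet A → μ A ≤ D * powerVariation (q / p) (X.powOn p f) A) :
    LambdaSup μ p q (fun x => g x / f x) ≤ D ^ (1 / p) * (ENNReal.ofReal b * X.N g) := by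
  have hqp : 0 < q / p := div_pos hq hp
  refine iSup_le fun n => iSup_le fun A => iSup_le fun ⟨hA, hdisj, _⟩ => ?_
  rw [one_div, ENNReal.rpow_inv_le_iff hq]
  have hterm (i : Fin n) : (⨅ x ∈ A i, ENNReal.ofReal |g x / f x|) ^ q * μ (A i) ^ (q / p) ≤
      D ^ (q / p) * powerVariation (q / p) (X.powOn p g) (A i) ^ (q / p) := by
    set I := ⨅ x ∈ A i, ENNReal.ofReal |g x / f x|
    calc I ^ q * μ (A i) ^ (q / p) = (I ^ p * μ (A i)) ^ (q / p) := by
          rw [ENNReal.mul_rpow_of_nonneg _ _ hqp.le, ← ENNReal.rpow_mul, mul_div_cancel₀ q hp.ne']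
      _ ≤ (I ^ p * (D * powerVariation (q / p) (X.powOn p f) (A i))) ^ (q / p) := by
          gcongr
          exact hμ _ (hA i)
      _ ≤ (D * powerVariation (q / p) (X.powOn p g) (A i)) ^ (q / p) := by
          rw [mul_left_comm]
          gcongr
          exact X.iInf_rpow_mul_powerVariation_le hqp hp hf hg (hA i)
      _ = _ := ENNReal.mul_rpow_of_nonneg _ _ hqp.le
  calc _ ≤ ∑ i, D ^ (q / p) * powerVariation (q / p) (X.powOn p g) (A i) ^ (q / p) :=
        Finset.sum_le_sum fun i _ => hterm i
    _ ≤ D ^ (q / p) * powerVariation (q / p) (X.powOn p g) (⋃ i, A i) ^ (q / p) := by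
        rw [← Finset.mul_sum, ← tsum_fintype (L := .unconditional _)]
        gcongr
        exact tsum_powerVariation_rpow_le hqp.ne' hA hdisj
    _ ≤ D ^ (q / p) * ((ENNReal.ofReal b * X.N g) ^ p) ^ (q / p) := by
        gcongr
        exact hX.powerVariation_powOn_le hp hq hg (.iUnion hA)
    _ = (D ^ (1 / p) * (ENNReal.ofReal b * X.N g)) ^ q := by
        rw [ENNReal.mul_rpow_of_nonneg _ _ hq.le, ← ENNReal.rpow_mul, ← ENNReal.rpow_mul,
          mul_div_cancel₀ q hp.ne', one_div_mul_eq_div]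

theorem CrudeLower.ae_pos_of_le_powerVariation (hX : CrudeLower X q b) (hp : 0 < p) (hq : 0 < q)
    (hf : Measurable f) {μ : Measure Ω} {D : ℝ≥0∞}
    (hμ : ∀ A, MeasurableSet A → μ A ≤ D * powerVariation (q / p) (X.powOn p f) A) :
    ∀ᵐ x ∂μ, f x ≠ 0 := by
  have hZ : MeasurableSet {x | f x = 0} := hf (measurableSet_singleton 0)
  have hle := X.mul_powerVariation_powOn_le (p := p) (g := 0) (div_pos hq hp) hp.le zero_le_one hf
    measurable_const hZ fun x (hx : f x = 0) => by simp only [hx, abs_zero, mul_zero, abs_nonneg]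
  have hzero := hX.powerVariation_powOn_le hp hq measurable_const (g := 0) hZ
  rw [X.N_zero, mul_zero, ENNReal.zero_rpow_of_pos hp] at hzero
  rw [ENNReal.ofReal_one, ENNReal.one_rpow, one_mul] at hle
  simpa only [ae_iff, not_not, nonpos_iff_eq_zero, mul_zero, nonpos_iff_eq_zero.1 (hle.trans hzero)]
    using hμ _ hZ

theorem exists_isProbabilityMeasure_le_powerVariation (hp : 0 < p) (hpq : p ≤ q)
    (hXa : CrudeUpper X p a) (hXb : CrudeLower X q b) (hf : Measurable f) (hf0 : 0 ≤ f)
    (hfX : X.N f = 1) :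
    ∃ μ : Measure Ω, IsProbabilityMeasure μ ∧ ∀ A, MeasurableSet A →
      μ A ≤ ENNReal.ofReal a ^ p * ENNReal.ofReal ((q / p) ^ (1 + 1 / (q / p))) *
        powerVariation (q / p) (X.powOn p f) A := by
  have hq : 0 < q := hp.trans_le hpq
  have hs : 1 ≤ q / p := (one_le_div hp).2 hpq
  have hs0 : 0 < q / p := zero_lt_one.trans_le hs
  have hempty : X.powOn p f ∅ = 0 := X.powOn_empty hp
  have huniv : 1 ≤ powerVariation (q / p) (X.powOn p f) univ := by
    simpa only [AdmissibleQuasinorm.powOn, indicator_univ, hfX, ENNReal.one_rpow] using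
      le_powerVariation hs0 hempty MeasurableSet.univ
  have htop : powerVariation (q / p) (X.powOn p f) univ ≠ ⊤ := by
    refine ne_top_of_le_ne_top ?_ (hXb.powerVariation_powOn_le hp hq hf .univ)
    rw [hfX, mul_one]
    exact ENNReal.rpow_ne_top_of_nonneg hp.le ENNReal.ofReal_ne_top
  have hlower : HasLowerEstimate (q / p) (powerVariation (q / p) (X.powOn p f)) :=
    hasLowerEstimate_powerVariation hs0.ne'
  have hcont : ContinuousFromBelow (powerVariation (q / p) (X.powOn p f)) :=
    continuousFromBelow_powerVariation (X.continuousFromBelow_powOn hf hf0) hs0 hempty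
  have hsub : QuasiSubadditive (ENNReal.ofReal a ^ p) (powerVariation (q / p) (X.powOn p f)) :=
    quasiSubadditive_powerVariation (hXa.quasiSubadditive_powOn hp hf hf0) hs hempty
  obtain ⟨μ, hprob, hμ⟩ := exists_isProbabilityMeasure_mul_le hs
    (ENNReal.rpow_ne_top_of_nonneg hp.le ENNReal.ofReal_ne_top) (one_pos.trans_le huniv).ne' htop
    (powerVariation_empty hs0) hsub hlower (hlower.continuousAtEmpty hs0 hcont htop)
  exact ⟨μ, hprob, fun A hA => (le_mul_of_one_le_left' huniv).trans (hμ A hA)⟩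

end Quasinorm

theorem rpow_one_div_mul_le_ofReal {p q : ℝ} (hp : 0 < p) (hq : 0 < q) (a b : ℝ) (N : ℝ≥0∞) :
    (ENNReal.ofReal a ^ p * ENNReal.ofReal ((q / p) ^ (1 + 1 / (q / p)))) ^ (1 / p) *
        (ENNReal.ofReal b * N) ≤
      ENNReal.ofReal (a * b * (q / p) ^ (1 / p + 1 / q)) * N := by
  have hexp : (1 + 1 / (q / p)) * (1 / p) = 1 / p + 1 / q := by field_simp
  have hab : ENNReal.ofReal a * ENNReal.ofReal b ≤ ENNReal.ofReal (a * b) := by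
    rcases le_total 0 a with ha | ha
    · exact (ENNReal.ofReal_mul ha).ge
    · simp only [ENNReal.ofReal_of_nonpos ha, zero_mul, zero_le]
  have hc : 0 ≤ (q / p) ^ (1 / p + 1 / q) := by positivity
  rw [ENNReal.mul_rpow_of_nonneg _ _ (one_div_pos.2 hp).le,
    ENNReal.ofReal_rpow_of_nonneg (by positivity) (one_div_pos.2 hp).le,
    ← Real.rpow_mul (by positivity), hexp, ← ENNReal.rpow_mul, mul_one_div_cancel hp.ne',
    ENNReal.rpow_one, ENNReal.ofReal_mul' hc, ← mul_assoc, mul_right_comm (ENNReal.ofReal a)]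
  gcongr

theorem exists_measure_lambdaSup_bound_general {Ω : Type*} [TopologicalSpace Ω] [MeasurableSpace Ω]
    {p q a b : ℝ} (hp : 0 < p) (hpq : p ≤ q) {X : AdmissibleQuasinorm Ω}
    (hXa : CrudeUpper X p a) (hXb : CrudeLower X q b)
    {f : Ω → ℝ} (hf : Measurable f) (hf0 : ∀ x, 0 ≤ f x) (hfX : X.N f = 1) :
    ∃ μ : Measure Ω, IsProbabilityMeasure μ ∧ (∀ᵐ x ∂μ, 0 < f x) ∧
      ∀ g : Ω → ℝ, Measurable g → LambdaSup μ p q (fun x => g x / f x) ≤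
        ENNReal.ofReal (a * b * (q / p) ^ (1 / p + 1 / q)) * X.N g := by
  have hq : 0 < q := hp.trans_le hpq
  obtain ⟨μ, hprob, hμ⟩ :=
    exists_isProbabilityMeasure_le_powerVariation hp hpq hXa hXb hf hf0 hfX
  refine ⟨μ, hprob, ?_, fun g hg => (hXb.lambdaSup_div_le hp hq hf hg hμ).trans
    (rpow_one_div_mul_le_ofReal hp hq a b _)⟩
  filter_upwards [hXb.ae_pos_of_le_powerVariation hp hq hf hμ] with x hx
  exact (hf0 x).lt_of_ne' hx

/-- Let `X` satisfy a crude upper `p`-estimate with constant `a` and a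
crude lower `q`-estimate with constant `b` (`0 < p < q`), and let `f ≥ 0` be Borel with
`‖f‖_X = 1`. Then there is a Borel probability measure `μ` with `f > 0` `μ`-a.e. and
`‖g f⁻¹‖_{Λ_{p,q}(μ)} ≤ a b K_{q/p}^{-1/p} ‖g‖_X` for all Borel `g ∈ X`,
where `K_s = 2(2^s - 1)^{-1/s} - 1`. -/
theorem exists_measure_lambdaSup_bound
    {Ω : Type*} [TopologicalSpace Ω] [CompactSpace Ω] [T2Space Ω]
    [MeasurableSpace Ω] [BorelSpace Ω]
    (p q a b : ℝ) (hp : 0 < p) (hpq : p < q)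
    (X : AdmissibleQuasinorm Ω)
    (hXa : CrudeUpper X p a) (hXb : CrudeLower X q b)
    (f : Ω → ℝ) (hf : Measurable f) (hf0 : ∀ x, 0 ≤ f x) (hfX : X.N f = 1) :
    ∃ μ : Measure Ω, IsProbabilityMeasure μ ∧ (∀ᵐ x ∂μ, 0 < f x) ∧
      ∀ g : Ω → ℝ, Measurable g → X.N g ≠ ⊤ →
        LambdaSup μ p q (fun x => g x / f x) ≤
          ENNReal.ofReal
            (a * b * (2 * ((2 : ℝ) ^ (q / p) - 1) ^ (-(p / q)) - 1) ^ (-(1 / p))) *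
            X.N g := by
  obtain ⟨μ, hprob, hpos, hμ⟩ :=
    exists_measure_lambdaSup_bound_general hp hpq.le hXa hXb hf hf0 hfX
  refine ⟨μ, hprob, hpos, fun g hg _ => (hμ g hg).trans ?_⟩
  gcongr ?_ * _
  exact ofReal_mul_rpow_le_ofReal_mul_two_mul_rpow_sub_one hp hpq.le (a * b)
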